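/- arXiv:1710.09287 — 2 statements merged into one kernel-verified Lean document; each statement's English description precedes it below -/
import Mathlib

section
/- Let ω ⊂ ℝ^d be a nonempty open connected set and v : ℝ^d → ℝ^d a Lipschitz, uniformly bounded vector field. Let μ⁰, μ¹ be compactly supported probability measures on ℝ^d, absolutely continuous with respect to the Lebesgue measure, satisfying the geometric condition. Then there exists T > 0 such that for every ε > 0 there exists a control u : ℝ^d × ℝ⁺ → ℝ^d with 𝟙_ω u uniformly bounded, Lipschitz in space and measurable in time, such that the (unique) solution μ of ∂_t μ + ∇·((v + 𝟙_ω u) μ) = 0, μ(0) = μ⁰, given by μ(t) = Φ_t^{v+𝟙_ω u} # μ⁰, satisfies W₁(μ(T), μ¹) ≤ ε. -/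
open MeasureTheory Set
open scoped ENNReal NNReal

noncomputable section

/-- The Euclidean space `ℝ^d`. -/
abbrev Euc (d : ℕ) := EuclideanSpace ℝ (Fin d)

/-- The support of a Borel measure: points all of whose open neighborhoods have
positive measure. -/
def msupport {d : ℕ} (μ : Measure (Euc d)) : Set (Euc d) :=
  {x | ∀ U : Set (Euc d), IsOpen U → x ∈ U → 0 < μ U}

/-- `Φ` is the flow of the (time-dependent) vector field `w`, in the Carathéodory
(integral) sense: `Φ t x = x + ∫₀ᵗ w (Φ s x) s ds`. -/
def IsFlow {d : ℕ} (w : Euc d → ℝ → Euc d) (Φ : ℝ → Euc d → Euc d) : Prop :=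
  ∀ x t, Φ t x = x + ∫ s in (0:ℝ)..t, w (Φ s x) s

/-- Wasserstein distance `W₁`, as an infimum over couplings. -/
def W1 {d : ℕ} (μ ν : Measure (Euc d)) : ℝ≥0∞ :=
  ⨅ (π : Measure (Euc d × Euc d)) (_ : π.map Prod.fst = μ) (_ : π.map Prod.snd = ν),
    ∫⁻ q, edist q.1 q.2 ∂π

/-- A vector field uniformly bounded, Lipschitz in space and measurable in time. -/
def IsRegularField {d : ℕ} (w : Euc d → ℝ → Euc d) : Prop :=
  (∃ C : ℝ, ∀ x t, ‖w x t‖ ≤ C) ∧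
  (∃ K : ℝ≥0, ∀ t : ℝ, LipschitzWith K fun x => w x t) ∧
  ∀ x, Measurable fun t => w x t

/-!
Stop the trajectories of `v` issued from `supp μ⁰` where they first meet a compact part of `ω`, then
carry them through a chain of overlapping balls in `ω` into one fixed ball `B`. Up to an arbitrarily
small mass, this gathers `μ⁰` in `B` within a time independent of that mass; applied to `-v`, it
gathers `μ¹` backwards in time. Fix a nonzero linear functional `l`. Its law under the gathered `μ⁰`
has no atom, because flow maps preserve absolute continuity. After rounding the gathered `μ¹` to a
finite net of `B` sorted by `l`, it is therefore the image of the gathered `μ⁰` under a step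
function of `l`, which up to small mass agrees with `x ↦ X (l x)` for a Lipschitz curve `X` with
`l ∘ X` monotone. Relaxing each `x` exponentially towards `X (l x)` moves the level sets of `l`
without ever merging them, so it is the flow of a Lipschitz field. Running the gathering of `μ¹` in
reverse then lands near `μ¹`. The mass lost on the way stays in a bounded set, hence costs little in
`W₁`.
-/

open Filter Function Metric
open scoped Topology

/-! ### Trajectories of regular fields -/

section Trajectory

theorem le_mul_exp_of_le_add_mul_integral {f : ℝ → ℝ} {a b K δ : ℝ} (hf : Continuous f)
    (hK : 0 ≤ K) (h : ∀ t ∈ Icc a b, f t ≤ δ + K * ∫ s in a..t, f s) :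
    ∀ t ∈ Icc a b, f t ≤ δ * Real.exp (K * (t - a)) := by
  intro t ht
  set G : ℝ → ℝ := fun t => δ + K * ∫ s in a..t, f s
  have hG : ∀ t, HasDerivAt G (K * f t) t := fun t =>
    ((hf.integral_hasStrictDerivAt a t).hasDerivAt.const_mul K).const_add δ
  have hGa : G a = δ := by simp [G]
  refine (h t ht).trans ?_
  rw [← gronwallBound_ε0]
  refine le_gronwallBound_of_liminf_deriv_right_le (f' := fun t => K * f t)
    (fun t _ => (hG t).continuousAt.continuousWithinAt)
    (fun t _ r hr => (hG t).hasDerivWithinAt.liminf_right_slope_le hr) hGa.le (fun t ht => ?_) t ht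
  simpa using mul_le_mul_of_nonneg_left (h t (Ico_subset_Icc_self ht)) hK

variable {d : ℕ} {w w' : Euc d → ℝ → Euc d} {a b c : ℝ} {γ γ' : ℝ → Euc d}

namespace IsRegularField

lemma measurable_uncurry (hw : IsRegularField w) : Measurable (uncurry w) :=
  let ⟨_, hK⟩ := hw.2.1
  measurable_uncurry_of_continuous_of_measurable (u := w) (fun t => (hK t).continuous) hw.2.2

lemma intervalIntegrable (hw : IsRegularField w) (hγ : Measurable γ) (a b : ℝ) :
    IntervalIntegrable (fun s => w (γ s) s) volume a b := by
  obtain ⟨C, hC⟩ := hw.1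
  exact (intervalIntegrable_const (c := C)).mono_fun
    (hw.measurable_uncurry.comp (hγ.prodMk measurable_id)).aestronglyMeasurable
    (ae_of_all _ fun s => (hC _ _).trans (le_abs_self C))

lemma neg (hw : IsRegularField w) : IsRegularField fun x t => -w x t :=
  let ⟨⟨C, hC⟩, ⟨K, hK⟩, hm⟩ := hw
  ⟨⟨C, fun x t => by simpa using hC x t⟩, ⟨K, fun t => (hK t).neg⟩, fun x => (hm x).neg⟩

lemma sub (hw : IsRegularField w) (hw' : IsRegularField w') :
    IsRegularField fun x t => w x t - w' x t :=
  let ⟨⟨C, hC⟩, ⟨K, hK⟩, hm⟩ := hw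
  let ⟨⟨C', hC'⟩, ⟨K', hK'⟩, hm'⟩ := hw'
  ⟨⟨C + C', fun x t => (norm_sub_le _ _).trans (add_le_add (hC x t) (hC' x t))⟩,
    ⟨K + K', fun t => (hK t).sub (hK' t)⟩, fun x => (hm x).sub (hm' x)⟩

lemma comp_time (hw : IsRegularField w) {τ : ℝ → ℝ} (hτ : Measurable τ) :
    IsRegularField fun x t => w x (τ t) :=
  let ⟨⟨C, hC⟩, ⟨K, hK⟩, hm⟩ := hw
  ⟨⟨C, fun x t => hC x (τ t)⟩, ⟨K, fun t => hK (τ t)⟩, fun x => (hm x).comp hτ⟩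

lemma ite (hw : IsRegularField w) (hw' : IsRegularField w') {p : ℝ → Prop} [DecidablePred p]
    (hp : MeasurableSet {t | p t}) :
    IsRegularField fun x t => if p t then w x t else w' x t := by
  obtain ⟨⟨C, hC⟩, ⟨K, hK⟩, hm⟩ := hw
  obtain ⟨⟨C', hC'⟩, ⟨K', hK'⟩, hm'⟩ := hw'
  refine ⟨⟨max C C', fun x t => ?_⟩, ⟨max K K', fun t => ?_⟩, fun x => (hm x).ite hp (hm' x)⟩
  · beta_reduce
    split_ifs
    exacts [(hC x t).trans (le_max_left _ _), (hC' x t).trans (le_max_right _ _)]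
  · beta_reduce
    split_ifs
    exacts [(hK t).weaken (le_max_left _ _), (hK' t).weaken (le_max_right _ _)]

end IsRegularField

/-- `γ` solves `γ' = w(γ, t)` on `[a, b]` in the integral sense. Continuity is demanded on all of
`ℝ`, so that integrability of `w(γ(s), s)` never depends on the interval. -/
structure IsTrajectoryOn (w : Euc d → ℝ → Euc d) (a b : ℝ) (γ : ℝ → Euc d) : Prop where
  continuous : Continuous γ
  eq_add_integral : ∀ t ∈ Icc a b, γ t = γ a + ∫ s in a..t, w (γ s) s

namespace IsTrajectoryOn

lemma sub_eq_integral (h : IsTrajectoryOn w a b γ) (hw : IsRegularField w) {s t : ℝ}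
    (hs : s ∈ Icc a b) (ht : t ∈ Icc a b) : γ t - γ s = ∫ r in s..t, w (γ r) r := by
  have hi := hw.intervalIntegrable h.continuous.measurable
  rw [← intervalIntegral.integral_interval_sub_left (hi a t) (hi a s), h.eq_add_integral t ht,
    h.eq_add_integral s hs, add_sub_add_left_eq_sub]

lemma mono (h : IsTrajectoryOn w a b γ) (hw : IsRegularField w) {a' b' : ℝ} (ha : a ≤ a')
    (hb : b' ≤ b) : IsTrajectoryOn w a' b' γ where
  continuous := h.continuous
  eq_add_integral t ht := by
    rw [← h.sub_eq_integral hw ⟨ha, ht.1.trans (ht.2.trans hb)⟩ ⟨ha.trans ht.1, ht.2.trans hb⟩,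
      add_sub_cancel]

lemma trans (h : IsTrajectoryOn w a b γ) (h' : IsTrajectoryOn w b c γ) (hw : IsRegularField w)
    (hab : a ≤ b) : IsTrajectoryOn w a c γ where
  continuous := h.continuous
  eq_add_integral t ht := by
    rcases le_total t b with htb | hbt
    · exact h.eq_add_integral t ⟨ht.1, htb⟩
    · have hi := hw.intervalIntegrable h.continuous.measurable
      rw [← intervalIntegral.integral_add_adjacent_intervals (hi a b) (hi b t), ← add_assoc,
        ← h.eq_add_integral b (right_mem_Icc.2 hab), ← h'.eq_add_integral t ⟨hbt, ht.2⟩]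

lemma translate (h : IsTrajectoryOn w a b γ) (S : ℝ) :
    IsTrajectoryOn (fun x t => w x (t - S)) (a + S) (b + S) fun t => γ (t - S) where
  continuous := h.continuous.comp (continuous_sub_right S)
  eq_add_integral t ht := by
    rw [intervalIntegral.integral_comp_sub_right (fun s => w (γ s) s), add_sub_cancel_right]
    exact h.eq_add_integral _ ⟨le_sub_iff_add_le.2 ht.1, sub_le_iff_le_add.2 ht.2⟩

lemma reverse (h : IsTrajectoryOn w 0 b γ) (hw : IsRegularField w) (hb : 0 ≤ b) :
    IsTrajectoryOn (fun x t => -w x (b - t)) 0 b fun t => γ (b - t) where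
  continuous := h.continuous.comp (continuous_sub_left b)
  eq_add_integral t ht := by
    rw [intervalIntegral.integral_neg,
      intervalIntegral.integral_comp_sub_left (fun s => w (γ s) s) b, sub_zero,
      ← intervalIntegral.integral_symm, ← h.sub_eq_integral hw (right_mem_Icc.2 hb)
        ⟨sub_nonneg.2 ht.2, sub_le_self b ht.1⟩, add_sub_cancel]

lemma congr_curve (h : IsTrajectoryOn w a b γ) (hγ' : Continuous γ') (he : EqOn γ' γ (Icc a b)) :
    IsTrajectoryOn w a b γ' where
  continuous := hγ'
  eq_add_integral t ht := by
    rw [he ht, he (left_mem_Icc.2 (ht.1.trans ht.2)), h.eq_add_integral t ht]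
    refine congrArg _ (intervalIntegral.integral_congr fun s hs => ?_)
    rw [uIcc_of_le ht.1] at hs
    simp only [he ⟨hs.1, hs.2.trans ht.2⟩]

lemma congr_field (h : IsTrajectoryOn w a b γ) (he : ∀ t ∈ Ico a b, w (γ t) t = w' (γ t) t) :
    IsTrajectoryOn w' a b γ where
  continuous := h.continuous
  eq_add_integral t ht := by
    rw [h.eq_add_integral t ht]
    refine congrArg _ (intervalIntegral.integral_congr_ae ?_)
    filter_upwards [volume.ae_ne t] with s hst hs
    rw [uIoc_of_le ht.1] at hs
    exact he s ⟨hs.1.le, (hs.2.lt_of_ne hst).trans_le ht.2⟩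

lemma of_hasDerivWithinAt (hw : IsRegularField w) (hγ : Continuous γ)
    (h : ∀ t ∈ Icc a b, HasDerivWithinAt γ (w (γ t) t) (Icc a b) t) :
    IsTrajectoryOn w a b γ where
  continuous := hγ
  eq_add_integral t ht := by
    rw [intervalIntegral.integral_eq_sub_of_hasDeriv_right_of_le ht.1 hγ.continuousOn
      (fun s hs => ?_) (hw.intervalIntegrable hγ.measurable a t), add_sub_cancel]
    exact ((h s ⟨hs.1.le, hs.2.le.trans ht.2⟩).hasDerivAt
      (Icc_mem_nhds hs.1 (hs.2.trans_le ht.2))).hasDerivWithinAt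

lemma norm_sub_le (h : IsTrajectoryOn w a b γ) (h' : IsTrajectoryOn w a b γ')
    (hw : IsRegularField w) {K : ℝ≥0} (hK : ∀ t, LipschitzWith K fun x => w x t) {t : ℝ}
    (ht : t ∈ Icc a b) : ‖γ t - γ' t‖ ≤ ‖γ a - γ' a‖ * Real.exp (K * (t - a)) := by
  have hc : Continuous fun s => ‖γ s - γ' s‖ := (h.continuous.sub h'.continuous).norm
  refine le_mul_exp_of_le_add_mul_integral hc K.2 (fun t ht => ?_) t ht
  have hi := hw.intervalIntegrable h.continuous.measurable a t
  have hi' := hw.intervalIntegrable h'.continuous.measurable a t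
  calc ‖γ t - γ' t‖ = ‖(γ a - γ' a) + ∫ s in a..t, (w (γ s) s - w (γ' s) s)‖ := by
        rw [intervalIntegral.integral_sub hi hi', h.eq_add_integral t ht, h'.eq_add_integral t ht]
        abel_nf
    _ ≤ ‖γ a - γ' a‖ + ∫ s in a..t, ‖w (γ s) s - w (γ' s) s‖ :=
        (norm_add_le _ _).trans
          (by gcongr; exact intervalIntegral.norm_integral_le_integral_norm ht.1)
    _ ≤ ‖γ a - γ' a‖ + ∫ s in a..t, K * ‖γ s - γ' s‖ := by
        gcongr
        exact intervalIntegral.integral_mono_on ht.1 (hi.sub hi').norm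
          ((hc.intervalIntegrable a t).const_mul _) fun s _ => (hK s).norm_sub_le _ _
    _ = _ := by rw [intervalIntegral.integral_const_mul]; rfl

lemma eqOn (h : IsTrajectoryOn w a b γ) (h' : IsTrajectoryOn w a b γ') (hw : IsRegularField w)
    (ha : γ a = γ' a) : EqOn γ γ' (Icc a b) := by
  obtain ⟨K, hK⟩ := hw.2.1
  intro t ht
  simpa [ha, sub_eq_zero] using h.norm_sub_le h' hw hK ht

lemma norm_sub_le_mul (h : IsTrajectoryOn w a b γ) (hab : a ≤ b) {C : ℝ}
    (hC : ∀ t ∈ Ioc a b, ‖w (γ t) t‖ ≤ C) : ‖γ b - γ a‖ ≤ C * (b - a) := by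
  rw [h.eq_add_integral b (right_mem_Icc.2 hab), add_sub_cancel_left]
  rw [← abs_of_nonneg (sub_nonneg.2 hab)]
  exact intervalIntegral.norm_integral_le_of_norm_le_const (uIoc_of_le hab ▸ hC)

lemma norm_le_of_bound_outside_closedBall (h : IsTrajectoryOn w a b γ) (hw : IsRegularField w)
    (hab : a ≤ b) {C R : ℝ} (hC : ∀ x t, R < ‖x‖ → ‖w x t‖ ≤ C) (hC0 : 0 ≤ C) :
    ‖γ b‖ ≤ max ‖γ a‖ R + C * (b - a) := by
  have from_time : ∀ s ∈ Icc a b, (∀ t ∈ Ioc s b, R < ‖γ t‖) → ‖γ b‖ ≤ ‖γ s‖ + C * (b - a) := by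
    intro s hs hout
    have hsub := (h.mono hw hs.1 le_rfl).norm_sub_le_mul hs.2 fun t ht => hC (γ t) t (hout t ht)
    have : C * (b - s) ≤ C * (b - a) := by gcongr; exact hs.1
    linarith [norm_le_norm_add_norm_sub' (γ b) (γ s)]
  by_cases hin : (Icc a b ∩ {s | ‖γ s‖ ≤ R}).Nonempty
  · have hcompact : IsCompact (Icc a b ∩ {s | ‖γ s‖ ≤ R}) :=
      isCompact_Icc.inter_right (isClosed_le h.continuous.norm continuous_const)
    -- `s` is the last time spent in the ball
    obtain ⟨s, ⟨hs, hsR⟩, hmax⟩ := hcompact.exists_isGreatest hin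
    refine (from_time s hs fun t ht => ?_).trans (by gcongr; exact le_max_of_le_right hsR)
    by_contra! htR
    exact ht.1.not_ge (hmax ⟨⟨hs.1.trans ht.1.le, ht.2⟩, htR⟩)
  · refine (from_time a (left_mem_Icc.2 hab) fun t ht => ?_).trans
      (by gcongr; exact le_max_left _ _)
    by_contra! htR
    exact hin ⟨t, ⟨ht.1.le, ht.2⟩, htR⟩

end IsTrajectoryOn

lemma IsRegularField.exists_isTrajectoryOn (hw : IsRegularField w)
    (hcont : ∀ x, Continuous fun t => w x t) (hab : a ≤ b) (x : Euc d) :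
    ∃ γ, IsTrajectoryOn w a b γ ∧ γ a = x := by
  obtain ⟨C, hC⟩ := hw.1
  obtain ⟨K, hK⟩ := hw.2.1
  have hC0 : 0 ≤ C := (norm_nonneg _).trans (hC 0 0)
  have hPL : IsPicardLindelof (fun t x => w x t) (tmin := a) (tmax := b) ⟨a, le_rfl, hab⟩ x
      (Real.toNNReal (C * (b - a))) 0 (Real.toNNReal C) K := by
    refine ⟨fun t _ => (hK t).lipschitzOnWith, fun y _ => (hcont y).continuousOn,
      fun t _ y _ => (hC y t).trans (Real.le_coe_toNNReal C), ?_⟩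
    rw [Real.coe_toNNReal C hC0, Real.coe_toNNReal _ (mul_nonneg hC0 (sub_nonneg.2 hab))]
    simp [hab]
  obtain ⟨γ, hγa, hγ⟩ := hPL.exists_eq_forall_mem_Icc_hasDerivWithinAt₀
  have hγc : ContinuousOn γ (Icc a b) := fun t ht => (hγ t ht).continuousWithinAt
  set γ' : ℝ → Euc d := IccExtend hab (domRestrict (Icc a b) γ)
  have he : EqOn γ' γ (Icc a b) := fun t ht => by simp [γ', IccExtend_of_mem hab _ ht]
  refine ⟨γ', .of_hasDerivWithinAt hw hγc.domRestrict.Icc_extend' fun t ht => ?_,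
    (he (left_mem_Icc.2 hab)).trans hγa⟩
  rw [he ht]
  exact (hγ t ht).congr he (he ht)

namespace IsFlow

variable {Φ : ℝ → Euc d → Euc d}

lemma map_zero (h : IsFlow w Φ) (x : Euc d) : Φ 0 x = x := by
  simpa using h x 0

/-- Off the interval of integrability the Bochner integral is `0`, so `Φ · x` is there constant;
on that interval it is Lipschitz. Hence `Φ · x` is measurable, and everything is integrable. -/
lemma continuous (h : IsFlow w Φ) (hw : IsRegularField w) (x : Euc d) :
    Continuous fun t => Φ t x := by
  obtain ⟨C, hC⟩ := hw.1
  set g := fun s => w (Φ s x) s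
  set P : Set ℝ := {t | IntervalIntegrable g volume 0 t}
  have hP : P.OrdConnected := by
    refine ⟨fun r hr s hs t ht => ?_⟩
    rcases le_total 0 t with h0 | h0
    · exact IntervalIntegrable.mono_set hs (uIcc_subset_uIcc_left
        (by rw [uIcc_of_le (h0.trans ht.2)]; exact ⟨h0, ht.2⟩))
    · exact IntervalIntegrable.mono_set hr (uIcc_subset_uIcc_left
        (by rw [uIcc_of_ge (ht.1.trans h0)]; exact ⟨ht.1, h0⟩))
  have hlip : LipschitzOnWith (Real.toNNReal C) (fun t => Φ t x) P := by
    refine LipschitzOnWith.of_dist_le_mul fun t ht s hs => ?_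
    have hsub : Φ t x - Φ s x = ∫ r in s..t, g r := by
      rw [← intervalIntegral.integral_interval_sub_left ht hs, h x t, h x s,
        add_sub_add_left_eq_sub]
    rw [dist_eq_norm, hsub, Real.dist_eq]
    exact intervalIntegral.norm_integral_le_of_norm_le_const fun r _ =>
      (hC _ _).trans (Real.le_coe_toNNReal C)
  have hconst : ∀ t ∈ Pᶜ, Φ t x = x := fun t ht => by
    rw [h x t, intervalIntegral.integral_undef ht, add_zero]
  have hmeas : Measurable fun t => Φ t x := by
    refine measurable_of_restrict_of_restrict_compl hP.measurableSet
      hlip.continuousOn.domRestrict.measurable ?_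
    have : domRestrict Pᶜ (fun t => Φ t x) = fun _ => x := funext fun t => hconst t t.2
    exact this ▸ measurable_const
  have hPuniv : P = univ := eq_univ_of_forall (hw.intervalIntegrable hmeas 0)
  exact (lipschitzOnWith_univ.1 (hPuniv ▸ hlip)).continuous

lemma isTrajectoryOn (h : IsFlow w Φ) (hw : IsRegularField w) (x : Euc d) (T : ℝ) :
    IsTrajectoryOn w 0 T fun t => Φ t x where
  continuous := h.continuous hw x
  eq_add_integral t _ := by simpa only [h.map_zero x] using h x t

lemma hasDerivAt {v : Euc d → Euc d} (h : IsFlow (fun x _ => v x) Φ)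
    (hv : IsRegularField fun x _ => v x) (x : Euc d) (t : ℝ) :
    HasDerivAt (fun t => Φ t x) (v (Φ t x)) t := by
  obtain ⟨_, hK⟩ := hv.2.1
  have hc : Continuous fun s => v (Φ s x) := (hK 0).continuous.comp (h.continuous hv x)
  exact ((hc.integral_hasStrictDerivAt 0 t).hasDerivAt.const_add x).congr_of_eventuallyEq
    (.of_forall (h x))

lemma neg {v : Euc d → Euc d} (h : IsFlow (fun x _ => v x) Φ) :
    IsFlow (fun x _ => -v x) fun t => Φ (-t) := by
  intro x t
  rw [intervalIntegral.integral_neg, intervalIntegral.integral_comp_neg fun s => v (Φ s x),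
    ← intervalIntegral.integral_symm, neg_zero]
  exact h x (-t)

end IsFlow

end Trajectory

/-! ### Flow maps and controlled flows -/

section FlowMap

variable {d : ℕ} {w w' : Euc d → ℝ → Euc d} {S T : ℝ} {F G : Euc d → Euc d}

/-- `F` is the time-`T` map of the flow of `w`. -/
def IsFlowMap (w : Euc d → ℝ → Euc d) (T : ℝ) (F : Euc d → Euc d) : Prop :=
  ∀ x, ∃ γ, IsTrajectoryOn w 0 T γ ∧ γ 0 = x ∧ γ T = F x

namespace IsFlowMap

lemma apply_eq (hF : IsFlowMap w T F) (hw : IsRegularField w) (hT : 0 ≤ T) {γ : ℝ → Euc d}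
    (hγ : IsTrajectoryOn w 0 T γ) : F (γ 0) = γ T := by
  obtain ⟨g, hg, hg0, hgT⟩ := hF (γ 0)
  exact hgT.symm.trans (hg.eqOn hγ hw hg0 (right_mem_Icc.2 hT))

lemma comp (hF : IsFlowMap w S F) (hG : IsFlowMap w' T G) (hw : IsRegularField w)
    (hw' : IsRegularField w') (hS : 0 ≤ S) (hT : 0 ≤ T) :
    IsFlowMap (fun x t => if t < S then w x t else w' x (t - S)) (S + T) (G ∘ F) := by
  intro x
  obtain ⟨γ, hγ, hγ0, hγS⟩ := hF x
  obtain ⟨γ', hγ', hγ'0, hγ'T⟩ := hG (F x)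
  set η : ℝ → Euc d := fun t => if t ≤ S then γ t else γ' (t - S)
  have hηc : Continuous η :=
    hγ.continuous.if_le (hγ'.continuous.comp (continuous_sub_right S)) continuous_id
      continuous_const fun t ht => by simp [ht, hγS, hγ'0]
  have hη_left : EqOn η γ (Icc 0 S) := fun t ht => if_pos ht.2
  have hη_right : EqOn η (fun t => γ' (t - S)) (Icc (0 + S) (T + S)) := fun t ht => by
    rcases (zero_add S ▸ ht.1).eq_or_lt with rfl | hlt
    · simp [η, hγS, hγ'0]
    · exact if_neg hlt.not_ge
  have h_left := (hγ.congr_curve hηc hη_left).congr_field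
    (w' := fun x t => if t < S then w x t else w' x (t - S)) fun t ht => by simp [ht.2]
  have h_right := ((hγ'.translate S).congr_curve hηc hη_right).congr_field
    (w' := fun x t => if t < S then w x t else w' x (t - S)) fun t ht => by
      simp [(zero_add S ▸ ht.1).not_gt]
  rw [zero_add, add_comm] at h_right
  refine ⟨η, h_left.trans h_right
    (hw.ite (hw'.comp_time (measurable_sub_const' S)) measurableSet_Iio) hS, ?_, ?_⟩
  · rw [hη_left (left_mem_Icc.2 hS), hγ0]
  · rw [hη_right ⟨by linarith, by linarith⟩]
    simp [hγ'T]

lemma symm {F : Euc d ≃ Euc d} (hF : IsFlowMap w T F) (hw : IsRegularField w) (hT : 0 ≤ T) :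
    IsFlowMap (fun x t => -w x (T - t)) T F.symm := by
  intro y
  obtain ⟨γ, hγ, hγ0, hγT⟩ := hF (F.symm y)
  exact ⟨_, hγ.reverse hw hT, by simp [hγT], by simp [hγ0]⟩

lemma exists_lipschitzWith (hF : IsFlowMap w T F) (hw : IsRegularField w) (hT : 0 ≤ T) :
    ∃ K, LipschitzWith K F := by
  obtain ⟨K, hK⟩ := hw.2.1
  refine ⟨Real.toNNReal (Real.exp (K * T)), LipschitzWith.of_dist_le' fun x y => ?_⟩
  obtain ⟨γ, hγ, rfl, hγT⟩ := hF x
  obtain ⟨γ', hγ', rfl, hγ'T⟩ := hF y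
  rw [← hγT, ← hγ'T, dist_eq_norm, dist_eq_norm, mul_comm]
  simpa using hγ.norm_sub_le hγ' hw hK (right_mem_Icc.2 hT)

end IsFlowMap

lemma IsRegularField.exists_isFlowMap (hw : IsRegularField w)
    (hcont : ∀ x, Continuous fun t => w x t) (hT : 0 ≤ T) :
    ∃ F : Euc d ≃ₜ Euc d, IsFlowMap w T F := by
  have hw' : IsRegularField fun x t => -w x (T - t) := (hw.comp_time (by fun_prop)).neg
  choose γ hγ hγ0 using fun x => hw.exists_isTrajectoryOn hcont hT x
  choose γ' hγ' hγ'0 using fun x => hw'.exists_isTrajectoryOn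
    (fun x => ((hcont x).comp (continuous_sub_left T)).neg) hT x
  have hF : IsFlowMap w T fun x => γ x T := fun x => ⟨γ x, hγ x, hγ0 x, rfl⟩
  have hG : IsFlowMap (fun x t => -w x (T - t)) T fun x => γ' x T :=
    fun x => ⟨γ' x, hγ' x, hγ'0 x, rfl⟩
  obtain ⟨_, hFlip⟩ := hF.exists_lipschitzWith hw hT
  obtain ⟨_, hGlip⟩ := hG.exists_lipschitzWith hw' hT
  refine ⟨⟨⟨fun x => γ x T, fun y => γ' y T, fun x => ?_, fun y => ?_⟩, hFlip.continuous,
    hGlip.continuous⟩, hF⟩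
  · simpa [hγ0] using hG.apply_eq hw' hT ((hγ x).reverse hw hT)
  · have := (hγ' y).reverse hw' hT
    simp only [sub_sub_cancel, neg_neg] at this
    simpa [hγ'0] using hF.apply_eq hw hT this

end FlowMap

section ControlledFlow

variable {d : ℕ} {v : Euc d → Euc d} {Z : Set (Euc d)} {S T : ℝ} {F G : Euc d ≃ₜ Euc d}

/-- `F` is the time-`T` flow map of a regular field that coincides with `v` outside the control
region `Z`. Flow maps are bundled as homeomorphisms, so that they can be run backwards. -/
def IsControlledFlow (v : Euc d → Euc d) (Z : Set (Euc d)) (T : ℝ) (F : Euc d ≃ₜ Euc d) : Prop :=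
  0 ≤ T ∧ ∃ w, IsRegularField w ∧ (∀ x ∉ Z, ∀ t, w x t = v x) ∧ IsFlowMap w T F

namespace IsControlledFlow

lemma mono (hF : IsControlledFlow v Z T F) {Z' : Set (Euc d)} (hZ : Z ⊆ Z') :
    IsControlledFlow v Z' T F :=
  let ⟨hT, w, hw, hwv, hwF⟩ := hF
  ⟨hT, w, hw, fun x hx => hwv x fun hxZ => hx (hZ hxZ), hwF⟩

lemma trans (hF : IsControlledFlow v Z S F) (hG : IsControlledFlow v Z T G) :
    IsControlledFlow v Z (S + T) (F.trans G) :=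
  let ⟨hS, _, hw, hwv, hwF⟩ := hF
  let ⟨hT, _, hw', hwv', hwG⟩ := hG
  ⟨add_nonneg hS hT, _, hw.ite (hw'.comp_time (measurable_sub_const' S)) measurableSet_Iio,
    fun x hx t => by rw [hwv x hx, hwv' x hx, ite_self], hwF.comp hwG hw hw' hS hT⟩

lemma symm (hF : IsControlledFlow v Z T F) : IsControlledFlow (fun x => -v x) Z T F.symm :=
  let ⟨hT, _, hw, hwv, hwF⟩ := hF
  ⟨hT, _, (hw.comp_time (by fun_prop)).neg, fun x hx t => by rw [hwv x hx],
    IsFlowMap.symm (F := F.toEquiv) hwF hw hT⟩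

lemma exists_lipschitzWith (hF : IsControlledFlow v Z T F) : ∃ K, LipschitzWith K F :=
  let ⟨hT, _, hw, _, hwF⟩ := hF
  hwF.exists_lipschitzWith hw hT

lemma norm_le (hF : IsControlledFlow v Z T F) {C R : ℝ} (hC : ∀ x, ‖v x‖ ≤ C)
    (hZ : Z ⊆ closedBall 0 R) (x : Euc d) : ‖F x‖ ≤ max ‖x‖ R + C * T := by
  obtain ⟨hT, w, hw, hwv, hwF⟩ := hF
  obtain ⟨γ, hγ, rfl, hγT⟩ := hwF x
  rw [← hγT]
  simpa using hγ.norm_le_of_bound_outside_closedBall hw hT (C := C) (R := R)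
    (fun x t hx => hwv x (fun hxZ => hx.not_ge (mem_closedBall_zero_iff.1 (hZ hxZ))) t ▸ hC x)
    ((norm_nonneg _).trans (hC 0))

lemma exists_control (hF : IsControlledFlow v Z T F) (hv : IsRegularField fun x _ => v x)
    {ω : Set (Euc d)} (hZ : Z ⊆ ω) :
    ∃ u : Euc d → ℝ → Euc d, IsRegularField (fun x t => ω.indicator (fun y => u y t) x) ∧
      ∀ Φ, IsFlow (fun x t => v x + ω.indicator (fun y => u y t) x) Φ → Φ T = F := by
  obtain ⟨hT, w, hw, hwv, hwF⟩ := hF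
  have hind : ∀ x t, ω.indicator (fun y => w y t - v y) x = w x t - v x := fun x t =>
    indicator_apply_eq_self.2 fun hx => by rw [hwv x fun hxZ => hx (hZ hxZ), sub_self]
  refine ⟨fun x t => w x t - v x, by simpa only [hind] using hw.sub hv, fun Φ hΦ => ?_⟩
  simp only [hind, add_sub_cancel] at hΦ
  ext1 x
  simpa [hΦ.map_zero] using (hwF.apply_eq hw hT (hΦ.isTrajectoryOn hw x T)).symm

end IsControlledFlow

end ControlledFlow

section LocalizedField

theorem lipschitzWith_smul_of_eq_zero_off {X E : Type*} [PseudoMetricSpace X]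
    [SeminormedAddCommGroup E] [NormedSpace ℝ E] {χ : X → ℝ} {Kχ : ℝ≥0}
    (hχ : LipschitzWith Kχ χ) (hχ1 : ∀ x, |χ x| ≤ 1) {A : Set X} (hχA : ∀ x ∉ A, χ x = 0)
    {f : X → E} {K M : ℝ≥0} (hf : LipschitzWith K f) (hM : ∀ x ∈ A, ‖f x‖ ≤ M) :
    LipschitzWith (Kχ * M + K) fun x => χ x • f x := by
  have of_mem : ∀ x ∈ A, ∀ y, dist (χ x • f x) (χ y • f y) ≤ (Kχ * M + K) * dist x y := by
    intro x hx y
    calc dist (χ x • f x) (χ y • f y) = ‖(χ x - χ y) • f x + χ y • (f x - f y)‖ := by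
          rw [dist_eq_norm, sub_smul, smul_sub]
          abel_nf
      _ ≤ ‖χ x - χ y‖ * ‖f x‖ + ‖χ y‖ * ‖f x - f y‖ := by
          simpa only [norm_smul] using norm_add_le ((χ x - χ y) • f x) (χ y • (f x - f y))
      _ ≤ (Kχ * dist x y) * M + 1 * (K * dist x y) := by
          rw [← dist_eq_norm, ← dist_eq_norm]
          gcongr
          exacts [hχ.dist_le_mul x y, hM x hx, hχ1 y, hf.dist_le_mul x y]
      _ = _ := by ring
  refine LipschitzWith.of_dist_le_mul fun x y => ?_
  push_cast
  by_cases hx : x ∈ A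
  · exact of_mem x hx y
  by_cases hy : y ∈ A
  · simpa only [dist_comm] using of_mem y hy x
  · simp only [hχA x hx, hχA y hy, zero_smul, dist_self]
    positivity

variable {d : ℕ} {v : Euc d → Euc d} {U : Euc d → ℝ → Euc d} {Q : Set (Euc d)} {m T : ℝ}

/-- The field equal to `U` on `Q` and to `v` outside the `m`-thickening of `Q`, interpolating
linearly in the distance to `Q` in between. -/
def localizedField (hm : 0 < m) (Q : Set (Euc d)) (v : Euc d → Euc d) (U : Euc d → ℝ → Euc d)
    (x : Euc d) (t : ℝ) : Euc d :=
  v x + (thickenedIndicator hm Q x : ℝ) • (U x t - v x)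

lemma localizedField_of_mem (hm : 0 < m) {x : Euc d} (hx : x ∈ Q) (t : ℝ) :
    localizedField hm Q v U x t = U x t := by
  simp [localizedField, thickenedIndicator_one hm Q hx]

lemma localizedField_of_notMem (hm : 0 < m) {x : Euc d} (hx : x ∉ thickening m Q) (t : ℝ) :
    localizedField hm Q v U x t = v x := by
  simp [localizedField, thickenedIndicator_zero hm Q hx]

lemma isRegularField_localizedField (hm : 0 < m) (hv : IsRegularField fun x _ => v x)
    (hUlip : ∃ K, ∀ t, LipschitzWith K fun x => U x t)
    (hUbdd : ∃ M, ∀ x ∈ thickening m Q, ∀ t, ‖U x t‖ ≤ M)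
    (hUmeas : ∀ x, Measurable fun t => U x t) : IsRegularField (localizedField hm Q v U) := by
  obtain ⟨⟨C, hC⟩, ⟨Kv, hKv⟩, -⟩ := hv
  obtain ⟨K, hK⟩ := hUlip
  obtain ⟨M, hM⟩ := hUbdd
  have hχ0 : ∀ x ∉ thickening m Q, (thickenedIndicator hm Q x : ℝ) = 0 := fun x hx => by
    simp [thickenedIndicator_zero hm Q hx]
  have hχ1 : ∀ x, |(thickenedIndicator hm Q x : ℝ)| ≤ 1 := fun x => by
    simpa using thickenedIndicator_le_one hm Q x
  have hdiff : ∀ x ∈ thickening m Q, ∀ t, ‖U x t - v x‖ ≤ Real.toNNReal (M + C) := fun x hx t =>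
    (norm_sub_le _ _).trans ((add_le_add (hM x hx t) (hC x t)).trans (Real.le_coe_toNNReal _))
  have hmeas : ∀ x, Measurable fun t => localizedField hm Q v U x t := fun x => by
    have := hUmeas x
    unfold localizedField
    fun_prop
  refine ⟨⟨C + Real.toNNReal (M + C), fun x t => (norm_add_le _ _).trans (add_le_add (hC x t) ?_)⟩,
    ⟨_, fun t => (hKv t).add (lipschitzWith_smul_of_eq_zero_off
      ((LipschitzWith.subtype_val _).comp (lipschitzWith_thickenedIndicator hm Q)) hχ1 hχ0
      ((hK t).sub (hKv t)) fun x hx => hdiff x hx t)⟩,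
    hmeas⟩
  by_cases hx : x ∈ thickening m Q
  · rw [norm_smul]
    exact (mul_le_of_le_one_left (norm_nonneg _) (hχ1 x)).trans (hdiff x hx t)
  · rw [hχ0 x hx, zero_smul, norm_zero]
    exact NNReal.coe_nonneg _

lemma exists_isControlledFlow_isFlowMap_localizedField (hm : 0 < m)
    (hv : IsRegularField fun x _ => v x) (hUlip : ∃ K, ∀ t, LipschitzWith K fun x => U x t)
    (hUbdd : ∃ M, ∀ x ∈ thickening m Q, ∀ t, ‖U x t‖ ≤ M)
    (hUcont : ∀ x, Continuous fun t => U x t) (hT : 0 ≤ T) :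
    ∃ F, IsControlledFlow v (thickening m Q) T F ∧ IsFlowMap (localizedField hm Q v U) T F := by
  have hw := isRegularField_localizedField hm hv hUlip hUbdd fun x => (hUcont x).measurable
  have hcont : ∀ x, Continuous fun t => localizedField hm Q v U x t := fun x => by
    have := hUcont x
    unfold localizedField
    fun_prop
  obtain ⟨F, hF⟩ := hw.exists_isFlowMap hcont hT
  exact ⟨F, ⟨hT, _, hw, fun x hx t => localizedField_of_notMem hm hx t, hF⟩, hF⟩

lemma exists_isControlledFlow_of_forall_hasDerivAt (hm : 0 < m)
    (hv : IsRegularField fun x _ => v x) (hUlip : ∃ K, ∀ t, LipschitzWith K fun x => U x t)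
    (hUbdd : ∃ M, ∀ x ∈ thickening m Q, ∀ t, ‖U x t‖ ≤ M)
    (hUcont : ∀ x, Continuous fun t => U x t) (hT : 0 ≤ T) :
    ∃ F, IsControlledFlow v (thickening m Q) T F ∧ ∀ γ : ℝ → Euc d, Continuous γ →
      (∀ t ∈ Icc 0 T, γ t ∈ Q ∧ HasDerivWithinAt γ (U (γ t) t) (Icc 0 T) t) →
        F (γ 0) = γ T := by
  have hw := isRegularField_localizedField hm hv hUlip hUbdd fun x => (hUcont x).measurable
  obtain ⟨F, hF, hFmap⟩ :=
    exists_isControlledFlow_isFlowMap_localizedField hm hv hUlip hUbdd hUcont hT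
  refine ⟨F, hF, fun γ hγ hγQ => hFmap.apply_eq hw hT (.of_hasDerivWithinAt hw hγ fun t ht => ?_)⟩
  rw [localizedField_of_mem hm (hγQ t ht).1]
  exact (hγQ t ht).2

end LocalizedField

/-! ### Gathering the mass -/

section Gathers

theorem exists_measure_le_of_ae_eventually_notMem {X : Type*} [MeasurableSpace X] {μ : Measure X}
    [IsFiniteMeasure μ] {A : ℕ → Set X} (hA : ∀ n, MeasurableSet (A n))
    (h : ∀ᵐ x ∂μ, ∀ᶠ n in atTop, x ∉ A n) {δ : ℝ≥0∞} (hδ : δ ≠ 0) : ∃ n, μ (A n) ≤ δ := by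
  have hlim : Tendsto (fun n => μ (A n)) atTop (𝓝 (μ ∅)) :=
    tendsto_measure_of_ae_tendsto_indicator_of_isFiniteMeasure atTop .empty hA
      (h.mono fun x hx => hx.mono fun n hn => by simp [hn])
  rw [measure_empty] at hlim
  exact (hlim.eventually (ge_mem_nhds hδ.bot_lt)).exists

variable {d : ℕ} {v : Euc d → Euc d} {Z A B C : Set (Euc d)} {S T : ℝ}

/-- Whatever the distribution of mass, controlled flows of duration `T` can bring all of the mass
of `A` into `B`, up to an arbitrarily small loss. -/
def Gathers (v : Euc d → Euc d) (Z : Set (Euc d)) (T : ℝ) (A B : Set (Euc d)) : Prop :=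
  ∀ (α : Measure (Euc d)) [IsFiniteMeasure α] (δ : ℝ≥0∞), δ ≠ 0 →
    ∃ F, IsControlledFlow v Z T F ∧ α (F ⁻¹' B)ᶜ ≤ α Aᶜ + δ

namespace Gathers

lemma mono (h : Gathers v Z T A B) {Z' : Set (Euc d)} (hZ : Z ⊆ Z') : Gathers v Z' T A B :=
  fun α _ δ hδ =>
    let ⟨F, hF, hFα⟩ := h α δ hδ
    ⟨F, hF.mono hZ, hFα⟩

lemma trans (h : Gathers v Z S A B) (h' : Gathers v Z T B C) : Gathers v Z (S + T) A C := by
  intro α _ δ hδ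
  have hδ2 : δ / 2 ≠ 0 := (ENNReal.half_pos hδ).ne'
  obtain ⟨F, hF, hFα⟩ := h α (δ / 2) hδ2
  obtain ⟨G, hG, hGα⟩ := h' (α.map F) (δ / 2) hδ2
  refine ⟨F.trans G, hF.trans hG, ?_⟩
  rw [F.measurableEmbedding.map_apply, F.measurableEmbedding.map_apply] at hGα
  calc α (F.trans G ⁻¹' C)ᶜ ≤ α (F ⁻¹' B)ᶜ + δ / 2 := hGα
    _ ≤ α Aᶜ + δ / 2 + δ / 2 := by gcongr
    _ = α Aᶜ + δ := by rw [add_assoc, ENNReal.add_halves]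

lemma of_forall_eventually (hB : IsOpen B) {F : ℕ → Euc d ≃ₜ Euc d}
    (hF : ∀ n, IsControlledFlow v Z T (F n)) (h : ∀ x ∈ A, ∀ᶠ n in atTop, F n x ∈ B) :
    Gathers v Z T A B := by
  intro α _ δ hδ
  have hm : ∀ n, MeasurableSet (F n ⁻¹' B) := fun n => (hB.preimage (F n).continuous).measurableSet
  have hae : ∀ᵐ x ∂α.restrict A, ∀ᶠ n in atTop, x ∉ (F n ⁻¹' B)ᶜ := by
    simp only [notMem_compl_iff, eventually_atTop]
    refine (ae_restrict_iff ?_).2 (ae_of_all _ fun x hx => eventually_atTop.1 (h x hx))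
    simp only [ofPred_exists, ofPred_forall]
    exact .iUnion fun N => .iInter fun n => .iInter fun _ => hm n
  obtain ⟨n, hn⟩ := exists_measure_le_of_ae_eventually_notMem (fun n => (hm n).compl) hae hδ
  refine ⟨F n, hF n, ?_⟩
  rw [Measure.restrict_apply (hm n).compl] at hn
  calc α (F n ⁻¹' B)ᶜ ≤ α ((F n ⁻¹' B)ᶜ \ A) + α ((F n ⁻¹' B)ᶜ ∩ A) := by
        rw [add_comm]
        exact measure_le_inter_add_sdiff _ _ _
    _ ≤ α Aᶜ + δ := add_le_add (measure_mono fun x hx => hx.2) hn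

end Gathers

end Gathers

section Stopping

variable {d : ℕ} {v : Euc d → Euc d} {K S : Set (Euc d)} {m T : ℝ} {Φ : ℝ → Euc d → Euc d}
  {g : ℝ → Euc d}

lemma IsRegularField.smul_time (hv : IsRegularField fun x _ => v x) {a : ℝ → ℝ}
    (ha : Measurable a) (ha1 : ∀ t, |a t| ≤ 1) : IsRegularField fun x t => a t • v x := by
  obtain ⟨⟨C, hC⟩, ⟨K, hK⟩, -⟩ := hv
  refine ⟨⟨C, fun x t => ?_⟩, ⟨K, fun t => .of_dist_le_mul fun x y => ?_⟩,
    fun x => ha.smul_const (v x)⟩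
  · rw [norm_smul]
    exact (mul_le_of_le_one_left (norm_nonneg _) (ha1 t)).trans (hC x t)
  · rw [dist_smul₀]
    exact (mul_le_of_le_one_left dist_nonneg (ha1 t)).trans ((hK t).dist_le_mul x y)

lemma IsTrajectoryOn.eqOn_flow_integral {a : ℝ → ℝ}
    (hg : IsTrajectoryOn (fun x t => a t • v x) 0 T g) (hv : IsRegularField fun x _ => v x)
    (hΦ : IsFlow (fun x _ => v x) Φ) (ha : Continuous a) (ha1 : ∀ t, |a t| ≤ 1) :
    EqOn g (fun t => Φ (∫ r in (0 : ℝ)..t, a r) (g 0)) (Icc 0 T) := by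
  have hw := hv.smul_time ha.measurable ha1
  have hs : ∀ t, HasDerivAt (fun t => ∫ r in (0 : ℝ)..t, a r) (a t) t := fun t =>
    (ha.integral_hasStrictDerivAt 0 t).hasDerivAt
  refine hg.eqOn (.of_hasDerivWithinAt hw ?_ fun t _ => ?_) hw (by simp [hΦ.map_zero])
  · exact (hΦ.continuous hv (g 0)).comp (continuous_iff_continuousAt.2 fun t => (hs t).continuousAt)
  · exact ((hΦ.hasDerivAt hv (g 0) _).scomp t (hs t)).hasDerivWithinAt

lemma IsTrajectoryOn.eq_of_field_eq_zero {w : Euc d → ℝ → Euc d} {a b t : ℝ}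
    (hg : IsTrajectoryOn w a b g) (hw : IsRegularField w) (ht : t ∈ Icc a b)
    (h : ∀ r, w (g t) r = 0) : g b = g t := by
  have hconst : IsTrajectoryOn w t b fun _ => g t := ⟨continuous_const, fun r _ => by simp [h]⟩
  exact (hg.mono hw ht.1 le_rfl).eqOn hconst hw rfl (right_mem_Icc.2 ht.2)

lemma IsTrajectoryOn.exists_time_change (hm : 0 < m)
    (hg : IsTrajectoryOn (localizedField hm K v 0) 0 T g) (hv : IsRegularField fun x _ => v x)
    (hΦ : IsFlow (fun x _ => v x) Φ) :
    ∃ s : ℝ → ℝ, Continuous s ∧ Monotone s ∧ s 0 = 0 ∧ EqOn g (fun t => Φ (s t) (g 0)) (Icc 0 T) ∧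
      ∀ t ≥ 0, (∀ r ∈ Icc 0 t, g r ∉ thickening m K) → s t = t := by
  set a : ℝ → ℝ := fun t => 1 - thickenedIndicator hm K (g t)
  have ha : Continuous a := by
    have := hg.continuous
    fun_prop
  have ha0 : ∀ t, 0 ≤ a t := fun t => sub_nonneg.2 (thickenedIndicator_le_one hm K _)
  have ha1 : ∀ t, |a t| ≤ 1 := fun t => by
    rw [abs_of_nonneg (ha0 t)]
    exact sub_le_self _ (NNReal.coe_nonneg _)
  have hg' : IsTrajectoryOn (fun x t => a t • v x) 0 T g := hg.congr_field fun t _ => by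
    change v (g t) + _ • (0 - v (g t)) = (1 - _) • v (g t)
    rw [zero_sub, smul_neg, sub_smul, one_smul, sub_eq_add_neg]
  have hs : ∀ t, HasDerivAt (fun t => ∫ r in (0 : ℝ)..t, a r) (a t) t := fun t =>
    (ha.integral_hasStrictDerivAt 0 t).hasDerivAt
  refine ⟨fun t => ∫ r in (0 : ℝ)..t, a r,
    continuous_iff_continuousAt.2 fun t => (hs t).continuousAt,
    monotone_of_hasDerivAt_nonneg hs ha0, by simp, hg'.eqOn_flow_integral hv hΦ ha ha1,
    fun t ht hout => ?_⟩
  have hone : ∀ r ∈ uIcc 0 t, a r = 1 := fun r hr => by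
    rw [uIcc_of_le ht] at hr
    change 1 - ((thickenedIndicator hm K (g r) : ℝ≥0) : ℝ) = 1
    rw [thickenedIndicator_zero hm K (hout r hr), NNReal.coe_zero, sub_zero]
  simpa using intervalIntegral.integral_congr (μ := volume) hone

/-- Points of `K` are stationary for the slowed-down field, which follows the orbits of `v`. An
orbit at positive distance from `K` until shortly before it meets `K` is not slowed down until
then, so it ends close to its first entry point into `K`. -/
lemma exists_forall_isTrajectoryOn_localizedField_mem (hv : IsRegularField fun x _ => v x)
    (hΦ : IsFlow (fun x _ => v x) Φ) (hK : IsClosed K) (hS : IsOpen S) (hKS : K ⊆ S) {x : Euc d}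
    (hit : ∃ t ∈ Icc 0 T, Φ t x ∈ K) :
    ∃ h₀ > 0, ∀ h (hh : 0 < h), h < h₀ → ∀ g, g 0 = x →
      IsTrajectoryOn (localizedField hh K v 0) 0 T g → g T ∈ S := by
  have hΦx := hΦ.continuous hv x
  obtain ⟨τ, ⟨hτ, hτK⟩, hτ_least⟩ :=
    (isCompact_Icc.inter_right (hK.preimage hΦx)).exists_isLeast hit
  obtain ⟨η, hη, hηS⟩ := Metric.mem_nhds_iff.1 ((hS.preimage hΦx).mem_nhds (hKS hτK))
  have hfar : Disjoint ((fun t => Φ t x) '' Icc 0 (τ - η / 2)) K := by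
    rw [Set.disjoint_left]
    rintro _ ⟨t, ht, rfl⟩ htK
    linarith [hτ_least ⟨⟨ht.1, by linarith [ht.2, hτ.2]⟩, htK⟩, ht.2]
  obtain ⟨h₀, hh₀, hdisj⟩ := hfar.exists_thickenings (isCompact_Icc.image hΦx) hK
  refine ⟨h₀, hh₀, fun h hh hlt g hg0 hg => ?_⟩
  have hT : 0 ≤ T := hτ.1.trans hτ.2
  obtain ⟨s, hsc, hs_mono, hs0, hgs, hs_eq⟩ := hg.exists_time_change hh hv hΦ
  rw [hg0] at hgs
  rcases le_or_gt τ (s T) with hle | hgt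
  · obtain ⟨a, ha, hsa⟩ := intermediate_value_Icc hT hsc.continuousOn ⟨hs0.trans_le hτ.1, hle⟩
    have hgK : g a ∈ K := by simpa [hgs ha, hsa] using hτK
    rw [hg.eq_of_field_eq_zero ?_ ha fun r => by rw [localizedField_of_mem hh hgK]; rfl]
    · exact hKS hgK
    · exact isRegularField_localizedField hh hv ⟨0, fun _ => .const 0⟩ ⟨0, by simp⟩
        fun _ => measurable_const
  · rw [hgs (right_mem_Icc.2 hT)]
    suffices hlate : τ - η < s T from
      hηS (by rw [Real.ball_eq_Ioo]; exact ⟨hlate, by linarith⟩)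
    by_contra! hearly
    have hout : ∀ r ∈ Icc 0 T, g r ∉ thickening h K := fun r hr hrK => by
      refine Set.disjoint_left.1 hdisj (self_subset_thickening hh₀ _ ?_)
        (thickening_mono hlt.le K (hgs hr ▸ hrK))
      exact mem_image_of_mem _ ⟨hs0 ▸ hs_mono hr.1, by linarith [hs_mono hr.2]⟩
    linarith [hs_eq T hT hout, hτ.2]

lemma gathers_of_forall_flow_mem (hm : 0 < m) (hv : IsRegularField fun x _ => v x)
    (hΦ : IsFlow (fun x _ => v x) Φ) (hT : 0 ≤ T) (hK : IsClosed K) (hS : IsOpen S) (hKS : K ⊆ S)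
    {A : Set (Euc d)} (hit : ∀ x ∈ A, ∃ t ∈ Icc 0 T, Φ t x ∈ K) :
    Gathers v (thickening m K) T A S := by
  have hpos : ∀ n : ℕ, 0 < m / (n + 1) := fun n => by positivity
  choose F hF hFmap using fun n => exists_isControlledFlow_isFlowMap_localizedField (U := 0)
    (Q := K) (hpos n) hv ⟨0, fun _ => .const 0⟩ ⟨0, by simp⟩ (fun _ => continuous_const) hT
  have hle : ∀ n : ℕ, m / (n + 1) ≤ m := fun n => div_le_self hm.le (by simp)
  refine .of_forall_eventually hS (fun n => (hF n).mono (thickening_mono (hle n) K)) fun x hx => ?_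
  obtain ⟨h₀, hh₀, hend_mem⟩ :=
    exists_forall_isTrajectoryOn_localizedField_mem hv hΦ hK hS hKS (hit x hx)
  have hlim : Tendsto (fun n : ℕ => m / ((n : ℝ) + 1)) atTop (𝓝 0) := by
    simpa [div_eq_mul_inv] using (tendsto_one_div_add_atTop_nhds_zero_nat (𝕜 := ℝ)).const_mul m
  filter_upwards [hlim.eventually (gt_mem_nhds hh₀)] with n hn
  obtain ⟨g, hg, hg0, hgT⟩ := hFmap n x
  exact hgT ▸ hend_mem _ (hpos n) hn g hg0 hg

end Stopping

section BallCluster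

variable {X : Type*} [PseudoMetricSpace X] {ω K S S' : Set X} {c₀ : X} {r₀ : ℝ}

/-- The union of `ball c₀ r₀` and of finitely many balls whose closures lie in `ω`, each of them
meeting the union of the previous ones. -/
inductive IsBallCluster (ω : Set X) (c₀ : X) (r₀ : ℝ) : Set X → Prop
  | ball : IsBallCluster ω c₀ r₀ (ball c₀ r₀)
  | union_ball {S : Set X} {c : X} {r : ℝ} (hS : IsBallCluster ω c₀ r₀ S) (hr : 0 < r)
      (hmeet : (Metric.ball c r ∩ S).Nonempty) (hω : closedBall c r ⊆ ω) :
      IsBallCluster ω c₀ r₀ (S ∪ Metric.ball c r)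

namespace IsBallCluster

lemma isOpen (h : IsBallCluster ω c₀ r₀ S) : IsOpen S := by
  induction h with
  | ball => exact isOpen_ball
  | union_ball _ _ _ _ ih => exact ih.union isOpen_ball

lemma ball_subset (h : IsBallCluster ω c₀ r₀ S) : Metric.ball c₀ r₀ ⊆ S := by
  induction h with
  | ball => exact subset_rfl
  | union_ball _ _ _ _ ih => exact ih.trans subset_union_left

lemma isBounded (h : IsBallCluster ω c₀ r₀ S) : Bornology.IsBounded S := by
  induction h with
  | ball => exact isBounded_ball
  | union_ball _ _ _ _ ih => exact ih.union isBounded_ball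

lemma closure_subset (h : IsBallCluster ω c₀ r₀ S) (h₀ : closedBall c₀ r₀ ⊆ ω) :
    closure S ⊆ ω := by
  induction h with
  | ball => exact closure_ball_subset_closedBall.trans h₀
  | union_ball _ _ _ hω ih =>
    rw [closure_union]
    exact union_subset ih (closure_ball_subset_closedBall.trans hω)

lemma union (h : IsBallCluster ω c₀ r₀ S) (h' : IsBallCluster ω c₀ r₀ S') :
    IsBallCluster ω c₀ r₀ (S ∪ S') := by
  induction h' with
  | ball => rwa [union_eq_left.2 h.ball_subset]
  | union_ball _ hr hmeet hω ih =>
    rw [← union_assoc]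
    exact ih.union_ball hr (hmeet.mono (inter_subset_inter_right _ subset_union_right)) hω

lemma exists_mem (hωo : IsOpen ω) (hωc : IsPreconnected ω) (hr₀ : 0 < r₀)
    (h₀ : closedBall c₀ r₀ ⊆ ω) {y : X} (hy : y ∈ ω) : ∃ S, IsBallCluster ω c₀ r₀ S ∧ y ∈ S := by
  set A : Set X := {y | ∃ S, IsBallCluster ω c₀ r₀ S ∧ y ∈ S}
  have hA : IsOpen A := isOpen_iff_mem_nhds.2 fun z ⟨S, hS, hz⟩ =>
    mem_of_superset (hS.isOpen.mem_nhds hz) fun y hy => ⟨S, hS, hy⟩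
  have hωA : IsOpen (ω \ A) := isOpen_iff_mem_nhds.2 fun z ⟨hz, hzA⟩ => by
    obtain ⟨ρ, hρ, hρω⟩ := nhds_basis_closedBall.mem_iff.1 (hωo.mem_nhds hz)
    refine mem_of_superset (ball_mem_nhds z hρ) fun y hy => ⟨hρω (ball_subset_closedBall hy), ?_⟩
    rintro ⟨S, hS, hyS⟩
    exact hzA ⟨_, hS.union_ball hρ ⟨y, hy, hyS⟩ hρω, .inr (mem_ball_self hρ)⟩
  by_contra hyA
  obtain ⟨z, -, hzA, -, hzA'⟩ := hωc A (ω \ A) hA hωA (fun z hz => by simp [hz])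
    ⟨c₀, h₀ (mem_closedBall_self hr₀.le), _, .ball, mem_ball_self hr₀⟩ ⟨y, hy, hy, hyA⟩
  exact hzA' hzA

lemma exists_superset (hωo : IsOpen ω) (hωc : IsPreconnected ω) (hr₀ : 0 < r₀)
    (h₀ : closedBall c₀ r₀ ⊆ ω) (hK : IsCompact K) (hKω : K ⊆ ω) :
    ∃ S, IsBallCluster ω c₀ r₀ S ∧ K ⊆ S := by
  refine hK.induction_on (p := fun K => ∃ S, IsBallCluster ω c₀ r₀ S ∧ K ⊆ S)
    ⟨_, .ball, empty_subset _⟩ (fun s t hst ⟨S, hS, htS⟩ => ⟨S, hS, hst.trans htS⟩)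
    (fun s t ⟨S, hS, hsS⟩ ⟨S', hS', htS'⟩ => ⟨_, hS.union hS', union_subset_union hsS htS'⟩)
    fun x hx => ?_
  obtain ⟨S, hS, hxS⟩ := exists_mem hωo hωc hr₀ h₀ (hKω hx)
  exact ⟨S, mem_nhdsWithin_of_mem_nhds (hS.isOpen.mem_nhds hxS), S, hS, subset_rfl⟩

end IsBallCluster

end BallCluster

section Relaxation

variable {E : Type*} [NormedAddCommGroup E] [NormedSpace ℝ E]

/-- The solution starting at `y` of the linear equation `γ' = M • (p - γ)`. -/
def relaxation (M : ℝ) (p y : E) (t : ℝ) : E := AffineMap.lineMap p y (Real.exp (-(M * t)))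

variable {M : ℝ} {p y : E} {t : ℝ}

lemma relaxation_zero : relaxation M p y 0 = y := by simp [relaxation]

lemma hasDerivAt_relaxation :
    HasDerivAt (relaxation M p y) (M • (p - relaxation M p y t)) t := by
  have hexp : HasDerivAt (fun t => Real.exp (-(M * t))) (Real.exp (-(M * t)) * -(M * 1)) t :=
    ((hasDerivAt_id t).const_mul M).neg.exp
  refine (((hexp.smul_const (y - p)).add_const p).congr_deriv ?_).congr_of_eventuallyEq
    (.of_forall fun s => AffineMap.lineMap_apply_module' p y _)
  rw [relaxation, AffineMap.lineMap_apply_module']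
  module

lemma continuous_relaxation : Continuous (relaxation M p y) :=
  continuous_iff_continuousAt.2 fun _ => hasDerivAt_relaxation.continuousAt

lemma relaxation_mem {s : Set E} (hs : Convex ℝ s) (hp : p ∈ s) (hy : y ∈ s) (hM : 0 ≤ M)
    (ht : 0 ≤ t) : relaxation M p y t ∈ s :=
  hs.lineMap_mem hp hy ⟨(Real.exp_pos _).le, Real.exp_le_one_iff.2 (by simpa using by positivity)⟩

lemma dist_relaxation : dist (relaxation M p y t) p = Real.exp (-(M * t)) * dist p y := by
  rw [relaxation, dist_lineMap_left, Real.norm_of_nonneg (Real.exp_pos _).le]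

lemma relaxation_mem_ball {c : E} {r ρ τ : ℝ} (hp : p ∈ closedBall c r) (hy : y ∈ closedBall c r)
    (hρ : 0 < ρ) (hτ : 0 < τ) : relaxation (2 * r / ρ / τ) p y τ ∈ ball p ρ := by
  have hexp : 2 * r < ρ * Real.exp (2 * r / ρ) := by
    rw [← div_lt_iff₀' hρ]
    linarith [Real.add_one_le_exp (2 * r / ρ)]
  rw [mem_ball, dist_relaxation, div_mul_cancel₀ _ hτ.ne', Real.exp_neg,
    inv_mul_lt_iff₀' (Real.exp_pos _)]
  linarith [dist_triangle_right p y c, mem_closedBall.1 hp, mem_closedBall.1 hy]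

end Relaxation

section GatherBall

variable {d : ℕ} {v : Euc d → Euc d} {Q S : Set (Euc d)} {m τ : ℝ}

lemma gathers_self (hm : 0 < m) (hv : IsRegularField fun x _ => v x) (hSQ : S ⊆ Q) (hτ : 0 ≤ τ) :
    Gathers v (thickening m Q) τ S S := by
  obtain ⟨F, hF, hFeq⟩ := exists_isControlledFlow_of_forall_hasDerivAt (U := 0) (Q := Q) hm hv
    ⟨0, fun _ => .const 0⟩ ⟨0, by simp⟩ (fun _ => continuous_const) hτ
  have hFS : S ⊆ F ⁻¹' S := fun x hx => by
    rw [mem_preimage, hFeq (fun _ => x) continuous_const fun t _ =>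
      ⟨hSQ hx, hasDerivWithinAt_const t _ x⟩]
    exact hx
  exact fun α _ δ _ => ⟨F, hF, (measure_mono (compl_subset_compl.2 hFS)).trans le_self_add⟩

lemma isRegularField_localizedField_zero (hm : 0 < m) (hQ : Bornology.IsBounded Q)
    {f : Euc d → Euc d} {K : ℝ≥0} (hf : LipschitzWith K f) :
    IsRegularField (localizedField hm Q 0 fun x _ => f x) := by
  obtain ⟨B, hB⟩ := (hf.isBounded_image hQ.thickening).exists_norm_le
  exact isRegularField_localizedField hm
    ⟨⟨0, by simp⟩, ⟨0, fun _ => .const 0⟩, fun _ => measurable_const⟩ ⟨K, fun _ => hf⟩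
    ⟨B, fun x hx _ => hB _ (mem_image_of_mem _ hx)⟩ fun _ => measurable_const

/-- Contract `closedBall c r` towards a point of `S`, with a cutoff that in the limit leaves
everything outside of the ball in place. -/
lemma gathers_union_ball (hm : 0 < m) (hv : IsRegularField fun x _ => v x) (hS : IsOpen S)
    {c : Euc d} {r : ℝ} (hmeet : (ball c r ∩ S).Nonempty) (hSQ : S ⊆ Q)
    (hcQ : closedBall c r ⊆ Q) (hτ : 0 < τ) :
    Gathers v (thickening m Q) τ (S ∪ ball c r) S := by
  obtain ⟨p, hp, hpS⟩ := hmeet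
  obtain ⟨ρ, hρ, hρS⟩ := Metric.isOpen_iff.1 hS p hpS
  replace hp := ball_subset_closedBall hp
  have hr : 0 ≤ r := dist_nonneg.trans hp
  set M : ℝ := 2 * r / ρ / τ
  have hlip : LipschitzWith _ fun z : Euc d => M • (p - z) :=
    (lipschitzWith_smul M).comp ((LipschitzWith.const p).sub .id)
  have hpos : ∀ n : ℕ, (0 : ℝ) < 1 / (n + 1) := fun n => Nat.one_div_pos_of_nat
  set U : ℕ → Euc d → ℝ → Euc d := fun n =>
    localizedField (hpos n) (closedBall c r) 0 fun z _ => M • (p - z)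
  have hU : ∀ n, IsRegularField (U n) := fun n =>
    isRegularField_localizedField_zero (hpos n) isBounded_closedBall hlip
  choose F hF hFeq using fun n => exists_isControlledFlow_of_forall_hasDerivAt (U := U n) (Q := Q)
    hm hv (hU n).2.1 ((hU n).1.imp fun C hC x _ t => hC x t) (fun x => continuous_const) hτ.le
  refine .of_forall_eventually hS hF fun x hx => ?_
  by_cases hxc : x ∈ closedBall c r
  · refine .of_forall fun n => ?_
    have := hFeq n (relaxation M p x) continuous_relaxation fun t ht => by
      have hmem : relaxation M p x t ∈ closedBall c r :=
        relaxation_mem (convex_closedBall c r) hp hxc (by positivity) ht.1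
      refine ⟨hcQ hmem, ?_⟩
      rw [show U n _ t = _ from localizedField_of_mem _ hmem t]
      exact hasDerivAt_relaxation.hasDerivWithinAt
    rw [relaxation_zero] at this
    exact this ▸ hρS (relaxation_mem_ball hp hxc hρ hτ)
  · have hxS : x ∈ S := hx.resolve_right fun hxb => hxc (ball_subset_closedBall hxb)
    have hout := eventually_notMem_thickening_of_infEDist_pos (E := closedBall c r) (x := x)
      (by rwa [isClosed_closedBall.closure_eq])
    filter_upwards [(tendsto_one_div_add_atTop_nhds_zero_nat (𝕜 := ℝ)).eventually hout] with n hn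
    rw [hFeq n (fun _ : ℝ => x) continuous_const fun t _ => ⟨hSQ hxS, ?_⟩]
    · exact hxS
    · rw [show U n x t = 0 from localizedField_of_notMem _ hn t]
      exact hasDerivWithinAt_const t _ x

lemma IsBallCluster.gathers {ω : Set (Euc d)} {c₀ : Euc d} {r₀ : ℝ}
    (hS : IsBallCluster ω c₀ r₀ S) (hm : 0 < m) (hv : IsRegularField fun x _ => v x)
    (hSQ : closure S ⊆ Q) (hτ : 0 < τ) : Gathers v (thickening m Q) τ S (Metric.ball c₀ r₀) := by
  induction hS generalizing τ with
  | ball => exact gathers_self hm hv (subset_closure.trans hSQ) hτ.le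
  | @union_ball S c r hS hr hmeet _ ih =>
    rw [closure_union, union_subset_iff, closure_ball c hr.ne'] at hSQ
    rw [← add_halves τ]
    exact (gathers_union_ball hm hv hS.isOpen hmeet (subset_closure.trans hSQ.1) hSQ.2
      (half_pos hτ)).trans (ih hSQ.1 (half_pos hτ))

end GatherBall

/-! ### Monotone rearrangement along a linear functional -/

section MonotoneBlend

variable {f : ℝ → ℝ} {η θ : ℝ}

/-- The convex combination `(1 - θ) f + θ id`. If trajectories relax towards targets that depend
monotonically on a coordinate `b`, it is the map which `b` undergoes. -/
def monotoneBlend (f : ℝ → ℝ) (θ b : ℝ) : ℝ := AffineMap.lineMap (f b) b θ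

lemma monotoneBlend_eq (f : ℝ → ℝ) (θ b : ℝ) : monotoneBlend f θ b = (1 - θ) * f b + θ * b :=
  AffineMap.lineMap_apply_module _ _ _

lemma antilipschitzWith_monotoneBlend (hf : Monotone f) (hη : 0 < η) (hθ : θ ∈ Icc η 1) :
    AntilipschitzWith (Real.toNNReal η⁻¹) (monotoneBlend f θ) := by
  refine .of_le_mul_dist fun b b' => ?_
  wlog hb : b' ≤ b generalizing b b'
  · rw [dist_comm, dist_comm (monotoneBlend f θ b)]
    exact this b' b (le_of_not_ge hb)
  rw [Real.coe_toNNReal _ (inv_nonneg.2 hη.le), le_inv_mul_iff₀ hη, Real.dist_eq, Real.dist_eq,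
    abs_of_nonneg (sub_nonneg.2 hb)]
  refine le_trans ?_ (le_abs_self _)
  rw [monotoneBlend_eq, monotoneBlend_eq]
  nlinarith [hf hb, hθ.1, hθ.2]

lemma surjective_monotoneBlend (hf : Continuous f) (hfb : ∃ C, ∀ b, |f b| ≤ C) (hθ : 0 < θ)
    (hθ1 : θ ≤ 1) : Surjective (monotoneBlend f θ) := by
  obtain ⟨C, hC⟩ := hfb
  have hid : monotoneBlend f θ = fun b => (1 - θ) * f b + θ * b := funext (monotoneBlend_eq f θ)
  have hbd : ∀ b, (1 - θ) * -C ≤ (1 - θ) * f b ∧ (1 - θ) * f b ≤ (1 - θ) * C := fun b =>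
    ⟨mul_le_mul_of_nonneg_left (neg_le_of_abs_le (hC b)) (sub_nonneg.2 hθ1),
      mul_le_mul_of_nonneg_left (le_of_abs_le (hC b)) (sub_nonneg.2 hθ1)⟩
  rw [hid]
  exact Continuous.surjective (by fun_prop)
    (tendsto_atTop_add_left_of_le _ _ (fun b => (hbd b).1) (tendsto_id.const_mul_atTop hθ))
    (tendsto_atBot_add_left_of_ge _ _ (fun b => (hbd b).2) (tendsto_id.const_mul_atBot hθ))

lemma continuousOn_invFun_monotoneBlend (hf : Monotone f) (hη : 0 < η)
    (hsurj : ∀ θ ∈ Icc η 1, Surjective (monotoneBlend f θ)) (z : ℝ) :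
    ContinuousOn (fun θ => invFun (monotoneBlend f θ) z) (Icc η 1) := by
  intro θ hθ
  set b := invFun (monotoneBlend f θ) z
  have hz : ∀ θ' ∈ Icc η 1, monotoneBlend f θ' (invFun (monotoneBlend f θ') z) = z :=
    fun θ' hθ' => rightInverse_invFun (hsurj θ' hθ') z
  have hlim : Tendsto (fun θ' => Real.toNNReal η⁻¹ * dist (monotoneBlend f θ' b) z)
      (𝓝[Icc η 1] θ) (𝓝 0) := by
    have hcont : Continuous fun θ' => Real.toNNReal η⁻¹ * dist (monotoneBlend f θ' b) z := by
      simp only [monotoneBlend_eq]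
      fun_prop
    simpa [b, hz θ hθ] using (hcont.tendsto θ).mono_left nhdsWithin_le_nhds
  rw [ContinuousWithinAt, tendsto_iff_dist_tendsto_zero]
  refine squeeze_zero' (.of_forall fun _ => dist_nonneg) ?_ hlim
  filter_upwards [self_mem_nhdsWithin] with θ' hθ'
  rw [dist_comm]
  simpa only [hz θ' hθ'] using
    (antilipschitzWith_monotoneBlend hf hη hθ').le_mul_dist b (invFun (monotoneBlend f θ') z)

lemma map_relaxation {E : Type*} [NormedAddCommGroup E] [NormedSpace ℝ E] (l : E →L[ℝ] ℝ)
    (X : ℝ → E) (M : ℝ) (y : E) (t : ℝ) :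
    l (relaxation M (X (l y)) y t)
      = monotoneBlend (fun s => l (X s)) (Real.exp (-(M * t))) (l y) := by
  rw [relaxation, monotoneBlend_eq, AffineMap.lineMap_apply_module, map_add, map_smul, map_smul,
    smul_eq_mul, smul_eq_mul]

end MonotoneBlend

section RelaxationFlow

variable {d : ℕ} {v : Euc d → Euc d} {Q S : Set (Euc d)} {m M : ℝ} {l : Euc d →L[ℝ] ℝ}
  {X : ℝ → Euc d} {K : ℝ≥0}

/-- The field whose trajectory from `y` relaxes to `X (l y)` at rate `M` during `[0, 1]`: since
`l` is transported by a monotone blend, `l y` can be recovered from the current position. -/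
def relaxationField (M : ℝ) (l : Euc d →L[ℝ] ℝ) (X : ℝ → Euc d) (z : Euc d) (t : ℝ) : Euc d :=
  M • (X (invFun (monotoneBlend (fun s => l (X s))
    (Real.exp (-(M * projIcc (0 : ℝ) 1 zero_le_one t)))) (l z)) - z)

lemma exp_neg_mul_projIcc_mem (hM : 0 ≤ M) (t : ℝ) :
    Real.exp (-(M * projIcc (0 : ℝ) 1 zero_le_one t)) ∈ Icc (Real.exp (-M)) 1 := by
  have hp := (projIcc (0 : ℝ) 1 zero_le_one t).2
  exact ⟨Real.exp_le_exp.2 (neg_le_neg (mul_le_of_le_one_right hM hp.2)),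
    Real.exp_le_one_iff.2 (neg_nonpos.2 (mul_nonneg hM hp.1))⟩

lemma surjective_monotoneBlend_map (hX : Continuous X) (hS : Bornology.IsBounded S)
    (hXS : ∀ s, X s ∈ S) {θ : ℝ} (hθ : θ ∈ Icc (Real.exp (-M)) 1) :
    Surjective (monotoneBlend (fun s => l (X s)) θ) := by
  obtain ⟨C, hC⟩ := (l.lipschitz.isBounded_image hS).exists_norm_le
  exact surjective_monotoneBlend (l.continuous.comp hX)
    ⟨C, fun s => hC _ (mem_image_of_mem l (hXS s))⟩ ((Real.exp_pos _).trans_le hθ.1) hθ.2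

lemma exists_lipschitzWith_relaxationField (hX : LipschitzWith K X) (hS : Bornology.IsBounded S)
    (hXS : ∀ s, X s ∈ S) (hXm : Monotone fun s => l (X s)) (hM : 0 ≤ M) :
    ∃ K', ∀ t, LipschitzWith K' fun z => relaxationField M l X z t := by
  have hinv := fun t =>
    (antilipschitzWith_monotoneBlend hXm (Real.exp_pos _)
      (exp_neg_mul_projIcc_mem hM t)).to_rightInverse (rightInverse_invFun
        (surjective_monotoneBlend_map hX.continuous hS hXS (exp_neg_mul_projIcc_mem hM t)))
  exact ⟨_, fun t =>
    (lipschitzWith_smul M).comp (((hX.comp (hinv t)).comp l.lipschitz).sub .id)⟩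

lemma continuous_relaxationField (hX : LipschitzWith K X) (hS : Bornology.IsBounded S)
    (hXS : ∀ s, X s ∈ S) (hXm : Monotone fun s => l (X s)) (hM : 0 ≤ M) (z : Euc d) :
    Continuous fun t => relaxationField M l X z t := by
  have hinv := (continuousOn_invFun_monotoneBlend hXm (Real.exp_pos (-M))
    (fun θ hθ => surjective_monotoneBlend_map hX.continuous hS hXS hθ) (l z)).comp_continuous
      (by fun_prop) (exp_neg_mul_projIcc_mem hM)
  exact ((hX.continuous.comp hinv).sub continuous_const).const_smul M

lemma norm_relaxationField_le (hM : 0 ≤ M) {C : ℝ} (hXC : ∀ s, ‖X s‖ ≤ C) {z : Euc d}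
    (hz : ‖z‖ ≤ C) (t : ℝ) : ‖relaxationField M l X z t‖ ≤ M * (C + C) := by
  rw [relaxationField, norm_smul, Real.norm_of_nonneg hM]
  exact mul_le_mul_of_nonneg_left ((norm_sub_le _ _).trans (add_le_add (hXC _) hz)) hM

lemma relaxationField_relaxation (hXm : Monotone fun s => l (X s)) (hM : 0 ≤ M) {y : Euc d}
    {t : ℝ} (ht : t ∈ Icc (0 : ℝ) 1) :
    relaxationField M l X (relaxation M (X (l y)) y t) t
      = M • (X (l y) - relaxation M (X (l y)) y t) := by
  have hθ := exp_neg_mul_projIcc_mem hM t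
  rw [relaxationField, map_relaxation]
  rw [projIcc_of_mem zero_le_one ht] at hθ ⊢
  rw [leftInverse_invFun (antilipschitzWith_monotoneBlend hXm (Real.exp_pos _) hθ).injective]

lemma exists_isControlledFlow_eq_relaxation (hm : 0 < m) (hv : IsRegularField fun x _ => v x)
    (hQ : Bornology.IsBounded Q) (hS : Convex ℝ S) (hSQ : S ⊆ Q) (hX : LipschitzWith K X)
    (hXS : ∀ s, X s ∈ S) (hXm : Monotone fun s => l (X s)) (hM : 0 ≤ M) :
    ∃ F, IsControlledFlow v (thickening m Q) 1 F ∧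
      ∀ y ∈ S, F y = relaxation M (X (l y)) y 1 := by
  obtain ⟨C, hC⟩ := (hQ.thickening (δ := m)).exists_norm_le
  have hbdd := hQ.subset hSQ
  obtain ⟨F, hF, hFeq⟩ := exists_isControlledFlow_of_forall_hasDerivAt hm hv (Q := Q)
    (exists_lipschitzWith_relaxationField hX hbdd hXS hXm hM)
    ⟨_, fun z hz t => norm_relaxationField_le hM
      (fun s => hC _ (self_subset_thickening hm Q (hSQ (hXS s)))) (hC z hz) t⟩
    (continuous_relaxationField hX hbdd hXS hXm hM) zero_le_one
  refine ⟨F, hF, fun y hy => ?_⟩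
  have := hFeq (relaxation M (X (l y)) y) continuous_relaxation fun t ht => by
    refine ⟨hSQ (relaxation_mem hS (hXS _) hy hM ht.1), ?_⟩
    rw [relaxationField_relaxation hXm hM ht]
    exact hasDerivAt_relaxation.hasDerivWithinAt
  rwa [relaxation_zero] at this

end RelaxationFlow

section LeftAverage

variable {E : Type*} [NormedAddCommGroup E] {σ : ℝ → E} {h C : ℝ}

lemma intervalIntegrable_of_norm_le (hσ : StronglyMeasurable σ) (hC : ∀ s, ‖σ s‖ ≤ C)
    (a b : ℝ) : IntervalIntegrable σ volume a b := by
  rw [intervalIntegrable_iff]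
  exact .of_bound measure_Ioc_lt_top hσ.aestronglyMeasurable C (.of_forall hC)

lemma intervalIntegrable_comp_sub_mul (hσ : StronglyMeasurable σ) (hC : ∀ s, ‖σ s‖ ≤ C) (h s : ℝ) :
    IntervalIntegrable (fun r => σ (s - h * r)) volume 0 1 :=
  intervalIntegrable_of_norm_le (hσ.comp_measurable (by fun_prop)) (fun _ => hC _) 0 1

variable [NormedSpace ℝ E]

/-- The mean of `σ` over `[s - h, s]`. -/
def leftAverage (h : ℝ) (σ : ℝ → E) (s : ℝ) : E := ∫ r in (0 : ℝ)..1, σ (s - h * r)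

lemma exists_lipschitzWith_leftAverage (hσ : StronglyMeasurable σ) (hC : ∀ s, ‖σ s‖ ≤ C)
    (hh : 0 < h) : ∃ K, LipschitzWith K (leftAverage h σ) := by
  have hσi := intervalIntegrable_of_norm_le hσ hC
  have hC0 : 0 ≤ C := (norm_nonneg _).trans (hC 0)
  refine ⟨Real.toNNReal (h⁻¹ * (2 * C)), .of_dist_le_mul fun s s' => ?_⟩
  have hshift : (∫ x in s - h..s, σ x) - ∫ x in s' - h..s', σ x
      = (∫ x in s'..s, σ x) - ∫ x in s' - h..s - h, σ x := by
    rw [intervalIntegral.integral_interval_sub_interval_comm (hσi _ _) (hσi _ _) (hσi _ _),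
      intervalIntegral.integral_symm s' s, intervalIntegral.integral_symm (s - h) (s' - h)]
    abel
  have hbound : ∀ a b, ‖∫ x in a..b, σ x‖ ≤ C * |b - a| := fun a b =>
    intervalIntegral.norm_integral_le_of_norm_le_const fun x _ => hC x
  rw [leftAverage, leftAverage, intervalIntegral.integral_comp_sub_mul _ hh.ne',
    intervalIntegral.integral_comp_sub_mul _ hh.ne', dist_smul₀,
    Real.coe_toNNReal _ (by positivity), norm_inv, Real.norm_of_nonneg hh.le, mul_assoc,
    mul_zero, mul_one, sub_zero, sub_zero, dist_eq_norm, hshift, Real.dist_eq]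
  gcongr
  calc ‖(∫ x in s'..s, σ x) - ∫ x in s' - h..s - h, σ x‖
      ≤ C * |s - s'| + C * |s - h - (s' - h)| :=
        (norm_sub_le _ _).trans (add_le_add (hbound _ _) (hbound _ _))
    _ = 2 * C * |s - s'| := by rw [sub_sub_sub_cancel_right]; ring

lemma leftAverage_mem [CompleteSpace E] (hσ : StronglyMeasurable σ) (hC : ∀ s, ‖σ s‖ ≤ C)
    {S : Set E} (hS : Convex ℝ S) (hSc : IsClosed S) (hσS : ∀ s, σ s ∈ S) (h s : ℝ) :
    leftAverage h σ s ∈ S := by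
  have hσi := intervalIntegrable_comp_sub_mul hσ hC h s
  rw [leftAverage, intervalIntegral.integral_of_le zero_le_one]
  have : IsProbabilityMeasure (volume.restrict (Ioc (0 : ℝ) 1)) := ⟨by simp⟩
  exact hS.integral_mem hSc (.of_forall fun _ => hσS _) hσi.1

lemma monotone_map_leftAverage [CompleteSpace E] (hσ : StronglyMeasurable σ)
    (hC : ∀ s, ‖σ s‖ ≤ C) {l : E →L[ℝ] ℝ} (hl : Monotone fun s => l (σ s)) (h : ℝ) :
    Monotone fun s => l (leftAverage h σ s) := by
  intro s s' hs
  have hσi := intervalIntegrable_comp_sub_mul hσ hC h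
  have hlint : ∀ s, IntervalIntegrable (fun r => l (σ (s - h * r))) volume 0 1 := fun s =>
    ⟨l.integrable_comp (hσi s).1, l.integrable_comp (hσi s).2⟩
  simp only [leftAverage]
  rw [← l.intervalIntegral_comp_comm (hσi s), ← l.intervalIntegral_comp_comm (hσi s')]
  exact intervalIntegral.integral_mono_on zero_le_one (hlint s) (hlint s')
    fun r _ => hl (sub_le_sub_right hs _)

lemma eventually_leftAverage_eq [CompleteSpace E] {s : ℝ}
    (hs : ∀ᶠ s' in 𝓝[≤] s, σ s' = σ s) : ∀ᶠ h in 𝓝[>] (0 : ℝ), leftAverage h σ s = σ s := by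
  obtain ⟨a, ha, has⟩ := mem_nhdsLE_iff_exists_Ioc_subset.1 hs
  filter_upwards [Ioo_mem_nhdsGT (sub_pos.2 ha)] with h hh
  have hconst : EqOn (fun r => σ (s - h * r)) (fun _ => σ s) (uIcc 0 1) := fun r hr => by
    rw [uIcc_of_le zero_le_one] at hr
    exact has ⟨by nlinarith [hh.1, hh.2, hr.2], by nlinarith [hh.1, hr.1]⟩
  rw [leftAverage, intervalIntegral.integral_congr hconst]
  simp

end LeftAverage

section Quantile

open ProbabilityTheory

variable (ν : Measure ℝ) [IsProbabilityMeasure ν] [NullSingletonClass ν]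

lemma continuous_cdf : Continuous (cdf ν) := by
  refine continuous_iff_continuousAt.2 fun s => ?_
  rw [(monotone_cdf ν).continuousAt_iff_leftLim_eq_rightLim, StieltjesFunction.rightLim_eq]
  have hjump := (cdf ν).measure_singleton s
  rw [measure_cdf, measure_singleton, eq_comm, ENNReal.ofReal_eq_zero] at hjump
  exact le_antisymm ((monotone_cdf ν).leftLim_le le_rfl) (sub_nonpos.1 hjump)

lemma exists_cdf_eq {m : ℝ} (hm₀ : 0 < m) (hm₁ : m < 1) : ∃ s, cdf ν s = m :=
  mem_range_of_exists_le_of_exists_ge (continuous_cdf ν)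
    (((tendsto_cdf_atBot ν).eventually_lt_const hm₀).exists.imp fun _ => le_of_lt)
    (((tendsto_cdf_atTop ν).eventually_const_lt hm₁).exists.imp fun _ => le_of_lt)

lemma measure_setOf_cdf_le {m : ℝ} (hm₀ : 0 ≤ m) (hm₁ : m ≤ 1) :
    ν {s | cdf ν s ≤ m} = ENNReal.ofReal m := by
  rcases hm₁.eq_or_lt with rfl | hm₁
  · simp [cdf_le_one]
  obtain ⟨b, hb⟩ := ((tendsto_cdf_atTop ν).eventually_const_lt hm₁).exists
  have hbdd : BddAbove {s | cdf ν s ≤ m} :=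
    ⟨b, fun s hs => ((monotone_cdf ν).reflect_lt (hs.trans_lt hb)).le⟩
  have hreach : 0 < m → ∃ s, cdf ν s = m := fun h => exists_cdf_eq ν h hm₁
  rcases eq_empty_or_nonempty {s | cdf ν s ≤ m} with hempty | hne
  · have hm : m = 0 := hm₀.antisymm' <| not_lt.1 fun h =>
      (hreach h).elim fun s hs => hempty.subset hs.le
    rw [hempty, measure_empty, hm, ENNReal.ofReal_zero]
  · set s₀ := sSup {s | cdf ν s ≤ m}
    have hs₀ : cdf ν s₀ ≤ m :=
      (isClosed_le (continuous_cdf ν) continuous_const).csSup_mem hne hbdd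
    have hIic : {s | cdf ν s ≤ m} = Iic s₀ := Subset.antisymm (fun s hs => le_csSup hbdd hs)
      fun s hs => (monotone_cdf ν hs).trans hs₀
    have hm : m ≤ cdf ν s₀ := hm₀.eq_or_lt.elim (fun h => h ▸ cdf_nonneg ν s₀) fun h =>
      (hreach h).elim fun s hs => hs ▸ monotone_cdf ν (le_csSup hbdd hs.le)
    rw [hIic, ← ofReal_cdf, hs₀.antisymm hm]

/-- The quantile function of `ρ` composed with the distribution function of `ν`. -/
lemma exists_monotone_map_eq (ρ : Measure ℕ) [IsProbabilityMeasure ρ] {N : ℕ}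
    (hN : ρ (Iic N) = 1) :
    ∃ i : ℝ → ℕ, Monotone i ∧ ν.map i = ρ ∧ ∀ s, ∀ᶠ s' in 𝓝[≤] s, i s' = i s := by
  classical
  have hex : ∀ s, ∃ k, cdf ν s ≤ ρ.real (Iic k) := fun s =>
    ⟨N, by simpa [measureReal_def, hN] using cdf_le_one ν s⟩
  set i : ℝ → ℕ := fun s => Nat.find (hex s)
  have hle : ∀ s k, i s ≤ k ↔ cdf ν s ≤ ρ.real (Iic k) := fun s k =>
    ⟨fun hk => (Nat.find_spec (hex s)).trans (measureReal_mono (Iic_subset_Iic.2 hk)),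
      Nat.find_min' (hex s)⟩
  have hmono : Monotone i := fun s s' hs =>
    (hle s _).2 ((monotone_cdf ν hs).trans ((hle s' _).1 le_rfl))
  refine ⟨i, hmono, ?_, fun s => ?_⟩
  · have := Measure.isProbabilityMeasure_map (μ := ν) hmono.measurable.aemeasurable
    refine Measure.ext_of_Iic _ _ fun k => ?_
    have hpre : i ⁻¹' Iic k = {s | cdf ν s ≤ ρ.real (Iic k)} := Set.ext fun s => hle s k
    rw [Measure.map_apply hmono.measurable measurableSet_Iic, hpre,
      measure_setOf_cdf_le ν measureReal_nonneg measureReal_le_one, ofReal_measureReal]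
  · have hge : ∀ᶠ s' in 𝓝 s, i s ≤ i s' := by
      rcases Nat.eq_zero_or_pos (i s) with h0 | hpos
      · exact .of_forall fun s' => h0 ▸ Nat.zero_le _
      have hlt : ρ.real (Iic (i s - 1)) < cdf ν s :=
        not_le.1 fun h => absurd ((hle s _).2 h) (by omega)
      filter_upwards [((continuous_cdf ν).tendsto s).eventually_const_lt hlt] with s' hs'
      have := mt (hle s' (i s - 1)).1 hs'.not_ge
      omega
    filter_upwards [hge.filter_mono nhdsWithin_le_nhds, self_mem_nhdsWithin] with s' h hs'
    exact (hmono hs').antisymm h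

end Quantile

section Gluing

variable {Y Z ι : Type*} [MeasurableSpace Y] [MeasurableSpace Z] [MeasurableSpace ι] [Countable ι]
  [MeasurableSingletonClass ι]

lemma sum_restrict_preimage_singleton (α : Measure Y) {f : Y → ι} (hf : Measurable f) :
    Measure.sum (fun k => α.restrict (f ⁻¹' {k})) = α := by
  rw [← Measure.restrict_iUnion
    (fun i j hij => (disjoint_singleton.2 hij).preimage f)
    fun k => hf (measurableSet_singleton k), ← preimage_iUnion, iUnion_of_singleton,
    preimage_univ, Measure.restrict_univ]

lemma inv_measure_mul_smul_restrict (α : Measure Y) [IsFiniteMeasure α] (A : Set Y) :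
    ((α A)⁻¹ * α A) • α.restrict A = α.restrict A := by
  by_cases hA : α A = 0
  · rw [Measure.restrict_eq_zero.2 hA, smul_zero]
  · rw [ENNReal.inv_mul_cancel hA (measure_ne_top _ _), one_smul]

lemma exists_coupling_of_map_eq (α : Measure Y) (β : Measure Z) [IsFiniteMeasure α]
    [IsFiniteMeasure β] {f : Y → ι} {g : Z → ι} (hf : Measurable f) (hg : Measurable g)
    (h : α.map f = β.map g) :
    ∃ π : Measure (Y × Z), π.map Prod.fst = α ∧ π.map Prod.snd = β ∧
      ∀ᵐ q ∂π, f q.1 = g q.2 := by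
  have hfm : ∀ k, MeasurableSet (f ⁻¹' {k}) := fun k => hf (measurableSet_singleton k)
  have hgm : ∀ k, MeasurableSet (g ⁻¹' {k}) := fun k => hg (measurableSet_singleton k)
  have hfg : ∀ k, α (f ⁻¹' {k}) = β (g ⁻¹' {k}) := fun k => by
    rw [← Measure.map_apply hf (measurableSet_singleton k), h,
      Measure.map_apply hg (measurableSet_singleton k)]
  refine ⟨Measure.sum fun k =>
    (α (f ⁻¹' {k}))⁻¹ • (α.restrict (f ⁻¹' {k})).prod (β.restrict (g ⁻¹' {k})), ?_, ?_, ?_⟩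
  · rw [Measure.map_sum measurable_fst.aemeasurable]
    simp_rw [Measure.map_smul, Measure.map_fst_prod, Measure.restrict_apply_univ, smul_smul,
      ← hfg, inv_measure_mul_smul_restrict]
    exact sum_restrict_preimage_singleton α hf
  · rw [Measure.map_sum measurable_snd.aemeasurable]
    simp_rw [Measure.map_smul, Measure.map_snd_prod, Measure.restrict_apply_univ, smul_smul,
      hfg, inv_measure_mul_smul_restrict]
    exact sum_restrict_preimage_singleton β hg
  · refine (Measure.ae_sum_iff (μ := fun k => _)).2 fun k => Measure.ae_smul_measure ?_ _
    rw [Measure.prod_restrict]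
    filter_upwards [ae_restrict_mem ((hfm k).prod (hgm k))] with q hq
    exact hq.1.trans hq.2.symm

end Gluing

lemma exists_monotone_enumeration {X : Type*} (s : Finset X) (hs : s.Nonempty) (φ : X → ℝ) :
    ∃ x : ℕ → X, Monotone (fun k => φ (x k)) ∧ (∀ k, x k ∈ s) ∧ ∀ y ∈ s, ∃ k < s.card, x k = y := by
  set e := s.equivFin
  set p : Fin s.card → X := fun k => e.symm k
  set τ := Tuple.sort fun k => φ (p k)
  have hlt : ∀ k, min k (s.card - 1) < s.card := fun k => by
    have := hs.card_pos
    omega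
  refine ⟨fun k => p (τ ⟨min k (s.card - 1), hlt k⟩), fun k k' hk =>
    Tuple.monotone_sort (fun k => φ (p k)) (Fin.mk_le_mk.2 (min_le_min_right _ hk)),
    fun k => (e.symm _).2, fun y hy => ⟨τ.symm (e ⟨y, hy⟩), Fin.is_lt _, ?_⟩⟩
  have hmin : min (τ.symm (e ⟨y, hy⟩) : ℕ) (s.card - 1) = τ.symm (e ⟨y, hy⟩) :=
    min_eq_left (Nat.le_sub_one_of_lt (Fin.is_lt _))
  simp [hmin, p]

lemma exists_monotone_net {X : Type*} [PseudoMetricSpace X] {K : Set X} (hK : IsCompact K)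
    (hKne : K.Nonempty) (φ : X → ℝ) {η : ℝ} (hη : 0 < η) :
    ∃ (x : ℕ → X) (N : ℕ), Monotone (fun k => φ (x k)) ∧ (∀ k, x k ∈ K) ∧
      ∀ z ∈ K, ∃ k ≤ N, dist (x k) z < η := by
  obtain ⟨t, htK, htf, hcov⟩ := hK.finite_cover_balls hη
  lift t to Finset X using htf
  have hcov' : ∀ z ∈ K, ∃ y ∈ t, z ∈ ball y η := fun z hz => by simpa using hcov hz
  obtain ⟨z₀, hz₀⟩ := hKne
  obtain ⟨x, hmono, hmem, hsurj⟩ :=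
    exists_monotone_enumeration t ((hcov' z₀ hz₀).imp fun _ h => h.1) φ
  refine ⟨x, t.card, hmono, fun k => htK (hmem k), fun z hz => ?_⟩
  obtain ⟨y, hy, hzy⟩ := hcov' z hz
  obtain ⟨k, hk, rfl⟩ := hsurj y hy
  exact ⟨k, hk.le, mem_ball'.1 hzy⟩

section Rearrangement

variable {E : Type*} [NormedAddCommGroup E] [NormedSpace ℝ E] {S : Set E} {l : E →L[ℝ] ℝ}

lemma exists_lipschitz_monotone_eq [CompleteSpace E] (ν : Measure ℝ) [IsFiniteMeasure ν]
    (hS : Convex ℝ S) (hSc : IsClosed S) (hSb : Bornology.IsBounded S) {σ : ℝ → E}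
    (hσ : StronglyMeasurable σ) (hσS : ∀ s, σ s ∈ S) (hσm : Monotone fun s => l (σ s))
    (hleft : ∀ s, ∀ᶠ s' in 𝓝[≤] s, σ s' = σ s) {δ : ℝ≥0∞} (hδ : δ ≠ 0) :
    ∃ (X : ℝ → E) (K : ℝ≥0), LipschitzWith K X ∧ (∀ s, X s ∈ S) ∧
      (Monotone fun s => l (X s)) ∧ ν {s | X s ≠ σ s} ≤ δ := by
  obtain ⟨C, hC⟩ := hSb.exists_norm_le
  replace hC : ∀ s, ‖σ s‖ ≤ C := fun s => hC _ (hσS s)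
  set h : ℕ → ℝ := fun n => 1 / (n + 1)
  have hpos : ∀ n, 0 < h n := fun n => Nat.one_div_pos_of_nat
  choose K hK using fun n => exists_lipschitzWith_leftAverage hσ hC (hpos n)
  have hlim : Tendsto h atTop (𝓝[>] 0) := tendsto_nhdsWithin_iff.2
    ⟨tendsto_one_div_add_atTop_nhds_zero_nat, .of_forall hpos⟩
  obtain ⟨n, hn⟩ := exists_measure_le_of_ae_eventually_notMem (μ := ν)
    (A := fun n => {s | leftAverage (h n) σ s ≠ σ s})
    (fun n => ((hK n).continuous.stronglyMeasurable.measurableSet_eq_fun hσ).compl)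
    (.of_forall fun s => (hlim.eventually (eventually_leftAverage_eq (hleft s))).mono
      fun n hn => not_not.2 hn) hδ
  exact ⟨leftAverage (h n) σ, K n, hK n, leftAverage_mem hσ hC hS hSc hσS (h n),
    monotone_map_leftAverage hσ hC hσm (h n), hn⟩

lemma exists_measurable_nearest_index {X : Type*} [PseudoMetricSpace X] [MeasurableSpace X]
    [OpensMeasurableSpace X] {S : Set X} {x : ℕ → X} {N : ℕ} {ε : ℝ}
    (hnet : ∀ z ∈ S, ∃ k ≤ N, dist (x k) z < ε) :
    ∃ κ : X → ℕ, Measurable κ ∧ (∀ z, κ z ≤ N) ∧ ∀ z ∈ S, dist (x (κ z)) z ≤ ε := by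
  refine ⟨SimpleFunc.nearestPtInd x N, SimpleFunc.measurable _, SimpleFunc.nearestPtInd_le x N,
    fun z hz => ?_⟩
  obtain ⟨k, hk, hkz⟩ := hnet z hz
  have hnear := SimpleFunc.edist_nearestPt_le x z hk
  rw [edist_dist, edist_dist, ENNReal.ofReal_le_ofReal_iff dist_nonneg] at hnear
  exact hnear.trans hkz.le

variable [MeasurableSpace E] [BorelSpace E] (α β : Measure E) [IsProbabilityMeasure α]
  [IsProbabilityMeasure β] [NullSingletonClass (α.map l)] {ε : ℝ} {δ : ℝ≥0∞}

/-- Round the second variable to a net of `S` sorted by `l`, and match the mass of `α` to it in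
the order of `l`. -/
lemma exists_coupling_lipschitz_monotone [CompleteSpace E] (hS : Convex ℝ S) (hSc : IsCompact S)
    (hSne : S.Nonempty) (hε : 0 < ε) (hδ : δ ≠ 0) :
    ∃ (X : ℝ → E) (K : ℝ≥0) (π : Measure (E × E)), LipschitzWith K X ∧ (∀ s, X s ∈ S) ∧
      (Monotone fun s => l (X s)) ∧ π.map Prod.fst = α ∧ π.map Prod.snd = β ∧
      π {q | q.2 ∈ S ∧ ε < dist (X (l q.1)) q.2} ≤ δ := by
  have hlm : Measurable l := l.continuous.measurable
  obtain ⟨x, N, hxm, hxS, hnet⟩ := exists_monotone_net hSc hSne l hε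
  obtain ⟨κ, hκm, hκN, hκ⟩ := exists_measurable_nearest_index hnet
  have := Measure.isProbabilityMeasure_map (μ := α) hlm.aemeasurable
  have := Measure.isProbabilityMeasure_map (μ := β) hκm.aemeasurable
  have hN : β.map κ (Iic N) = 1 := by
    rw [Measure.map_apply hκm measurableSet_Iic, preimage_eq_univ_iff.2 (range_subset_iff.2 hκN),
      measure_univ]
  obtain ⟨i, him, himap, hleft⟩ := exists_monotone_map_eq (α.map l) (β.map κ) hN
  rw [Measure.map_map him.measurable hlm] at himap
  obtain ⟨π, hπα, hπβ, hπ⟩ :=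
    exists_coupling_of_map_eq α β (him.measurable.comp hlm) hκm himap
  obtain ⟨X, K, hXK, hXS, hXm, hXδ⟩ := exists_lipschitz_monotone_eq (α.map l) hS hSc.isClosed
    hSc.isBounded (StronglyMeasurable.of_discrete.comp_measurable him.measurable)
    (fun s => hxS (i s)) (fun s s' hs => hxm (him hs))
    (fun s => (hleft s).mono fun s' hs' => congrArg x hs') hδ
  refine ⟨X, K, π, hXK, hXS, hXm, hπα, hπβ, le_trans ?_ hXδ⟩
  calc π {q | q.2 ∈ S ∧ ε < dist (X (l q.1)) q.2}
      ≤ π (Prod.fst ⁻¹' (l ⁻¹' {s | X s ≠ x (i s)})) := by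
        refine measure_mono_ae ?_
        filter_upwards [hπ] with q (hq : i (l q.1) = κ q.2) hfar (hX : X (l q.1) = x (i (l q.1)))
        obtain ⟨hqS, hfar⟩ : q.2 ∈ S ∧ ε < dist (X (l q.1)) q.2 := hfar
        rw [hX, hq] at hfar
        exact hfar.not_ge (hκ _ hqS)
    _ ≤ α.map l {s | X s ≠ x (i s)} := by
        rw [← hπα]
        exact (Measure.le_map_apply measurable_fst.aemeasurable _).trans
          (Measure.le_map_apply hlm.aemeasurable _)

end Rearrangement

/-- A fast relaxation towards `X (l y)` brings each `y` in the ball close to its target. -/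
lemma exists_isControlledFlow_coupling {d : ℕ} {v : Euc d → Euc d} {Q : Set (Euc d)} {m : ℝ}
    {c : Euc d} {r : ℝ} (hm : 0 < m) (hv : IsRegularField fun x _ => v x)
    (hQ : Bornology.IsBounded Q) (hr : 0 ≤ r) (hcQ : closedBall c r ⊆ Q) {l : Euc d →L[ℝ] ℝ}
    (α β : Measure (Euc d)) [IsProbabilityMeasure α] [IsProbabilityMeasure β]
    [NullSingletonClass (α.map l)] {ε : ℝ} {δ : ℝ≥0∞} (hε : 0 < ε) (hδ : δ ≠ 0) :
    ∃ F, IsControlledFlow v (thickening m Q) 1 F ∧ ∃ π : Measure (Euc d × Euc d),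
      π.map Prod.fst = α ∧ π.map Prod.snd = β ∧
      π {q | ε < dist (F q.1) q.2} ≤ α (closedBall c r)ᶜ + β (closedBall c r)ᶜ + δ := by
  set S := closedBall c r
  obtain ⟨X, K, π, hXK, hXS, hXm, hπα, hπβ, hπ⟩ := exists_coupling_lipschitz_monotone (l := l) α β
    (convex_closedBall c r) (isCompact_closedBall c r) ⟨c, mem_closedBall_self hr⟩
    (half_pos hε) hδ
  obtain ⟨F, hF, hFeq⟩ := exists_isControlledFlow_eq_relaxation (M := 2 * r / (ε / 2)) hm hv hQ
    (convex_closedBall c r) hcQ hXK hXS hXm (by positivity)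
  refine ⟨F, hF, π, hπα, hπβ, ?_⟩
  have hclose : ∀ y ∈ S, dist (F y) (X (l y)) < ε / 2 := fun y hy => by
    simpa [hFeq y hy] using relaxation_mem_ball (hXS (l y)) hy (half_pos hε) one_pos
  have hcover : {q : Euc d × Euc d | ε < dist (F q.1) q.2} ⊆
      Prod.fst ⁻¹' Sᶜ ∪ Prod.snd ⁻¹' Sᶜ ∪ {q | q.2 ∈ S ∧ ε / 2 < dist (X (l q.1)) q.2} := by
    intro q (hq : ε < dist (F q.1) q.2)
    by_contra hnot
    simp only [mem_union, mem_preimage, mem_compl_iff, mem_ofPred_eq, not_or, not_not, not_and,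
      not_lt] at hnot
    linarith [dist_triangle (F q.1) (X (l q.1)) q.2, hclose q.1 hnot.1.1, hnot.2 hnot.1.2]
  calc π {q | ε < dist (F q.1) q.2}
      ≤ π (Prod.fst ⁻¹' Sᶜ) + π (Prod.snd ⁻¹' Sᶜ) + δ :=
        (measure_mono hcover).trans ((measure_union_le _ _).trans
          (add_le_add (measure_union_le _ _) hπ))
    _ ≤ α Sᶜ + β Sᶜ + δ := by
        rw [← hπα, ← hπβ]
        gcongr
        · exact Measure.le_map_apply measurable_fst.aemeasurable _
        · exact Measure.le_map_apply measurable_snd.aemeasurable _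

/-! ### Null sets and absolute continuity -/

section AbsolutelyContinuous

lemma measure_compl_msupport {d : ℕ} (μ : Measure (Euc d)) : μ (msupport μ)ᶜ = 0 := by
  have hsupp : msupport μ = μ.support := by
    simp only [Measure.support_eq_forall_isOpen, msupport, imp.swap (b := IsOpen _)]
  rw [hsupp, Measure.measure_compl_support]

variable {E : Type*} [NormedAddCommGroup E] [NormedSpace ℝ E] [FiniteDimensional ℝ E]
  [MeasurableSpace E] [BorelSpace E] {α μ : Measure E} [μ.IsAddHaarMeasure]

lemma addHaar_image_eq_zero_of_lipschitzWith {f : E → E} {K : ℝ≥0} (hf : LipschitzWith K f)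
    {s : Set E} (hs : μ s = 0) : μ (f '' s) = 0 := by
  have hle := hf.hausdorffMeasure_image_le (Module.finrank ℝ E).cast_nonneg s
  rw [Measure.absolutelyContinuous_isAddHaarMeasure _ μ hs, mul_zero] at hle
  exact Measure.absolutelyContinuous_isAddHaarMeasure _ _ (le_zero_iff.1 hle)

lemma absolutelyContinuous_map_of_lipschitzWith_symm (h : α ≪ μ) {F : E ≃ₜ E} {K : ℝ≥0}
    (hF : LipschitzWith K F.symm) : α.map F ≪ μ := by
  intro s hs
  rw [F.measurableEmbedding.map_apply, ← F.image_symm]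
  exact h (addHaar_image_eq_zero_of_lipschitzWith hF hs)

lemma nullSingletonClass_map_of_absolutelyContinuous (h : α ≪ μ) {l : E →L[ℝ] ℝ} (hl : l ≠ 0) :
    NullSingletonClass (α.map l) where
  measure_singleton s := by
    have hsurj : Surjective (l : E →ₗ[ℝ] ℝ) :=
      LinearMap.surjective (by exact_mod_cast hl)
    have hne : ∀ᵐ x ∂μ, l x ∈ ({s} : Set ℝ)ᶜ :=
      (ae_comp_linearMap_mem_iff _ μ volume hsurj (measurableSet_singleton s).compl).2
        (measure_eq_zero_iff_ae_notMem.1 (measure_singleton s))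
    rw [Measure.map_apply l.continuous.measurable (measurableSet_singleton s)]
    exact measure_eq_zero_iff_ae_notMem.2 (h.ae_le hne)

end AbsolutelyContinuous

/-! ### Steering between the two measures -/

section Steering

lemma W1_map_le {d : ℕ} {Ω : Type*} [MeasurableSpace Ω] {π : Measure Ω} [IsProbabilityMeasure π]
    {f g : Ω → Euc d} (hf : Measurable f) (hg : Measurable g) {D : ℝ≥0∞}
    (hD : ∀ᵐ q ∂π, edist (f q) (g q) ≤ D) (η : ℝ≥0∞) :
    W1 (π.map f) (π.map g) ≤ η + D * π {q | η < edist (f q) (g q)} := by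
  set far := {q | η < edist (f q) (g q)}
  have hfar : MeasurableSet far := measurableSet_lt measurable_const (hf.edist hg)
  calc W1 (π.map f) (π.map g) ≤ ∫⁻ q, edist q.1 q.2 ∂π.map fun q => (f q, g q) :=
        iInf_le_of_le _ (iInf_le_of_le (Measure.map_map measurable_fst (hf.prodMk hg))
          (iInf_le_of_le (Measure.map_map measurable_snd (hf.prodMk hg)) le_rfl))
    _ = ∫⁻ q, edist (f q) (g q) ∂π := lintegral_map (by fun_prop) (hf.prodMk hg)
    _ ≤ ∫⁻ q, η + far.indicator (fun _ => D) q ∂π := by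
        refine lintegral_mono_ae (hD.mono fun q hq => ?_)
        by_cases hqf : q ∈ far
        · simpa [hqf] using le_add_left hq
        · simpa [hqf] using not_lt.1 hqf
    _ = η + D * π far := by
        rw [lintegral_add_left measurable_const, lintegral_const, measure_univ, mul_one,
          lintegral_indicator_const hfar]

lemma W1_map_comp_le {d : ℕ} {X : Type*} [MeasurableSpace X] {α : Measure X} {β : Measure (Euc d)}
    [IsProbabilityMeasure α] {π : Measure (X × Euc d)} (hα : π.map Prod.fst = α)
    (hβ : π.map Prod.snd = β) {G : Euc d → Euc d} {H : X → Euc d} (hH : Measurable H) {L : ℝ≥0}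
    (hG : LipschitzWith L G) {a b : ℝ} (ha : ∀ᵐ x ∂α, ‖G (H x)‖ ≤ a) (hb : ∀ᵐ y ∂β, ‖G y‖ ≤ b)
    (η : ℝ) :
    W1 (α.map (G ∘ H)) (β.map G) ≤
      ENNReal.ofReal (L * η) + ENNReal.ofReal (a + b) * π {q | η < dist (H q.1) q.2} := by
  have hGm : Measurable G := hG.continuous.measurable
  subst hα hβ
  have : IsProbabilityMeasure π :=
    (Measure.isProbabilityMeasure_map_iff measurable_fst.aemeasurable).1 ‹_›
  rw [Measure.map_map (hGm.comp hH) measurable_fst, Measure.map_map hGm measurable_snd]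
  have hbound : ∀ᵐ q ∂π, edist (G (H q.1)) (G q.2) ≤ ENNReal.ofReal (a + b) := by
    filter_upwards [ae_of_ae_map measurable_fst.aemeasurable ha,
      ae_of_ae_map measurable_snd.aemeasurable hb] with q hqa hqb
    rw [edist_dist]
    exact ENNReal.ofReal_le_ofReal ((dist_le_norm_add_norm _ _).trans (add_le_add hqa hqb))
  refine (W1_map_le (hGm.comp (hH.comp measurable_fst)) (hGm.comp measurable_snd) hbound
    (ENNReal.ofReal (L * η))).trans ?_
  gcongr with q
  intro hq
  by_contra hle
  refine hq.not_ge ((edist_dist _ _).trans_le (ENNReal.ofReal_le_ofReal ?_))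
  exact (hG.dist_le_mul _ _).trans (mul_le_mul_of_nonneg_left (not_lt.1 hle) L.2)

variable {d : ℕ} {v : Euc d → Euc d} {Q : Set (Euc d)} {m r S₀ S₁ : ℝ} {c : Euc d}
  {μ₀ μ₁ : Measure (Euc d)} [IsProbabilityMeasure μ₀] [IsProbabilityMeasure μ₁]

/-- Run `F₀`, then match the two gathered measures, then run `F₁` backwards. -/
lemma exists_isControlledFlow_W1_map_le [Nontrivial (Euc d)] (hm : 0 < m)
    (hv : IsRegularField fun x _ => v x) (hr : 0 ≤ r) (hcQ : closedBall c r ⊆ Q) (h₀ : μ₀ ≪ volume)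
    {C R : ℝ} (hC : ∀ x, ‖v x‖ ≤ C) (hR : thickening m Q ⊆ closedBall 0 R)
    (hR₀ : ∀ᵐ x ∂μ₀, ‖x‖ ≤ R) (hR₁ : ∀ᵐ x ∂μ₁, ‖x‖ ≤ R) {F₀ F₁ : Euc d ≃ₜ Euc d}
    (hF₀ : IsControlledFlow v (thickening m Q) S₀ F₀)
    (hF₁ : IsControlledFlow (fun x => -v x) (thickening m Q) S₁ F₁)
    {ε : ℝ} (hε : 0 < ε) {δ : ℝ≥0∞} (hδ : δ ≠ 0) :
    ∃ F, IsControlledFlow v (thickening m Q) (S₀ + 1 + S₁) F ∧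
      W1 (μ₀.map F) μ₁ ≤ ENNReal.ofReal ε + ENNReal.ofReal (R + C * (S₀ + 1 + S₁) + R) *
        (μ₀ (F₀ ⁻¹' closedBall c r)ᶜ + μ₁ (F₁ ⁻¹' closedBall c r)ᶜ + δ) := by
  have hG : IsControlledFlow v (thickening m Q) S₁ F₁.symm := by simpa using hF₁.symm
  obtain ⟨L, hL⟩ := hG.exists_lipschitzWith
  obtain ⟨K, hK⟩ := hF₀.symm.exists_lipschitzWith
  obtain ⟨l, hl⟩ := exists_ne (0 : Euc d →L[ℝ] ℝ)
  have := Measure.isProbabilityMeasure_map (μ := μ₀) F₀.measurable.aemeasurable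
  have := Measure.isProbabilityMeasure_map (μ := μ₁) F₁.measurable.aemeasurable
  have := nullSingletonClass_map_of_absolutelyContinuous
    (absolutelyContinuous_map_of_lipschitzWith_symm h₀ hK) hl
  have hQ : Bornology.IsBounded Q :=
    isBounded_closedBall.subset ((self_subset_thickening hm Q).trans hR)
  obtain ⟨H, hH, π, hπ₀, hπ₁, hπ⟩ := exists_isControlledFlow_coupling (l := l) hm hv hQ hr hcQ
    (μ₀.map F₀) (μ₁.map F₁) (ε := ε / (L + 1)) (by positivity) hδ
  rw [F₀.measurableEmbedding.map_apply, F₁.measurableEmbedding.map_apply,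
    preimage_compl, preimage_compl] at hπ
  have hF := (hF₀.trans hH).trans hG
  refine ⟨_, hF, ?_⟩
  calc W1 (μ₀.map ((F₀.trans H).trans F₁.symm)) μ₁
      = W1 ((μ₀.map F₀).map (F₁.symm ∘ H)) ((μ₁.map F₁).map F₁.symm) := by
        rw [Measure.map_map (by fun_prop) (by fun_prop), Measure.map_map (by fun_prop)
          (by fun_prop), F₁.symm_comp_self, Measure.map_id]
        rfl
    _ ≤ ENNReal.ofReal (L * (ε / (L + 1))) + ENNReal.ofReal (R + C * (S₀ + 1 + S₁) + R) *
          π {q | ε / (L + 1) < dist (H q.1) q.2} := by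
        refine W1_map_comp_le hπ₀ hπ₁ H.measurable hL ?_ ?_ _
        · rw [F₀.measurableEmbedding.ae_map_iff]
          exact hR₀.mono fun x hx => by simpa [hx] using hF.norm_le hC hR x
        · simpa [F₁.measurableEmbedding.ae_map_iff] using hR₁
    _ ≤ _ := by
        gcongr
        rw [mul_div_assoc', div_le_iff₀ (by positivity), mul_comm]
        gcongr
        simp

lemma exists_isControlledFlow_W1_map_le_of_gathers [Nontrivial (Euc d)] (hm : 0 < m)
    (hv : IsRegularField fun x _ => v x) (hQ : Bornology.IsBounded Q) (hr : 0 ≤ r)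
    (hcQ : closedBall c r ⊆ Q) (h₀ : μ₀ ≪ volume) {A₀ A₁ : Set (Euc d)}
    (hA₀ : Bornology.IsBounded A₀) (hμ₀ : μ₀ A₀ᶜ = 0) (hA₁ : Bornology.IsBounded A₁)
    (hμ₁ : μ₁ A₁ᶜ = 0) (hG₀ : Gathers v (thickening m Q) S₀ A₀ (ball c r))
    (hG₁ : Gathers (fun x => -v x) (thickening m Q) S₁ A₁ (ball c r)) {ε : ℝ} (hε : 0 < ε) :
    ∃ F, IsControlledFlow v (thickening m Q) (S₀ + 1 + S₁) F ∧
      W1 (μ₀.map F) μ₁ ≤ ENNReal.ofReal ε := by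
  obtain ⟨C, hC⟩ := hv.1
  obtain ⟨R, hR⟩ := (hQ.thickening.union (hA₀.union hA₁)).subset_closedBall (0 : Euc d)
  simp only [union_subset_iff, subset_def (s := A₀), subset_def (s := A₁),
    mem_closedBall_zero_iff] at hR
  obtain ⟨hRQ, hRA₀, hRA₁⟩ := hR
  set D := ENNReal.ofReal (R + C * (S₀ + 1 + S₁) + R)
  obtain ⟨δ, hδ, hDδ⟩ := ENNReal.exists_nnreal_pos_mul_lt (a := 3 * D) (by finiteness)
    (ENNReal.ofReal_pos.2 (half_pos hε)).ne'
  replace hδ : (δ : ℝ≥0∞) ≠ 0 := by exact_mod_cast hδ.ne'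
  obtain ⟨F₀, hF₀, hF₀δ⟩ := hG₀ μ₀ δ hδ
  obtain ⟨F₁, hF₁, hF₁δ⟩ := hG₁ μ₁ δ hδ
  obtain ⟨F, hF, hFW⟩ := exists_isControlledFlow_W1_map_le hm hv hr hcQ h₀ (hC · 0) hRQ
    ((measure_eq_zero_iff_ae_notMem.1 hμ₀).mono fun x hx => hRA₀ x (not_not.1 hx))
    ((measure_eq_zero_iff_ae_notMem.1 hμ₁).mono fun x hx => hRA₁ x (not_not.1 hx))
    hF₀ hF₁ (half_pos hε) hδ
  rw [hμ₀, zero_add] at hF₀δ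
  rw [hμ₁, zero_add] at hF₁δ
  refine ⟨F, hF, hFW.trans ?_⟩
  calc ENNReal.ofReal (ε / 2) +
        D * (μ₀ (F₀ ⁻¹' closedBall c r)ᶜ + μ₁ (F₁ ⁻¹' closedBall c r)ᶜ + δ)
      ≤ ENNReal.ofReal (ε / 2) + D * (δ + δ + δ) := by
        gcongr
        · exact (measure_mono (compl_subset_compl.2
            (preimage_mono ball_subset_closedBall))).trans hF₀δ
        · exact (measure_mono (compl_subset_compl.2
            (preimage_mono ball_subset_closedBall))).trans hF₁δ
    _ = ENNReal.ofReal (ε / 2) + δ * (3 * D) := by ring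
    _ ≤ ENNReal.ofReal (ε / 2) + ENNReal.ofReal (ε / 2) := by gcongr
    _ = ENNReal.ofReal ε := by rw [← ENNReal.ofReal_add (by positivity) (by positivity), add_halves]

lemma IsFlow.exists_isCompact_forall_mem {w : Euc d → ℝ → Euc d} {Φ : ℝ → Euc d → Euc d}
    (hΦ : IsFlow w Φ) (hw : IsRegularField w) {ω K : Set (Euc d)} (hω : IsOpen ω)
    (hK : IsCompact K) (hit : ∀ x ∈ K, ∃ t, 0 < t ∧ Φ t x ∈ ω) :
    ∃ (L : Set (Euc d)) (T : ℝ), IsCompact L ∧ L ⊆ ω ∧ 0 ≤ T ∧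
      ∀ x ∈ K, ∃ t ∈ Icc 0 T, Φ t x ∈ L := by
  refine hK.induction_on (p := fun K => ∃ (L : Set (Euc d)) (T : ℝ), IsCompact L ∧ L ⊆ ω ∧ 0 ≤ T ∧
    ∀ x ∈ K, ∃ t ∈ Icc 0 T, Φ t x ∈ L) ?_ ?_ ?_ fun x hx => ?_
  · exact ⟨∅, 0, isCompact_empty, empty_subset _, le_rfl, fun x hx => hx.elim⟩
  · exact fun s t hst ⟨L, T, hL, hLω, hT, htL⟩ => ⟨L, T, hL, hLω, hT, fun x hx => htL x (hst hx)⟩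
  · rintro s s' ⟨L, T, hL, hLω, hT, hsL⟩ ⟨L', T', hL', hLω', -, hsL'⟩
    refine ⟨L ∪ L', max T T', hL.union hL', union_subset hLω hLω', le_max_of_le_left hT, ?_⟩
    rintro x (hx | hx)
    · obtain ⟨t, ht, htL⟩ := hsL x hx
      exact ⟨t, Icc_subset_Icc_right (le_max_left T T') ht, .inl htL⟩
    · obtain ⟨t, ht, htL⟩ := hsL' x hx
      exact ⟨t, Icc_subset_Icc_right (le_max_right T T') ht, .inr htL⟩
  · obtain ⟨t, ht, htω⟩ := hit x hx
    obtain ⟨r, hr, hrω⟩ := nhds_basis_closedBall.mem_iff.1 (hω.mem_nhds htω)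
    have hΦt : IsFlowMap w t (Φ t) := fun x => ⟨_, hΦ.isTrajectoryOn hw x t, hΦ.map_zero x, rfl⟩
    obtain ⟨M, hM⟩ := hΦt.exists_lipschitzWith hw ht.le
    exact ⟨Φ t ⁻¹' closedBall (Φ t x) r, mem_nhdsWithin_of_mem_nhds
      (hM.continuous.continuousAt.preimage_mem_nhds (closedBall_mem_nhds _ hr)),
      closedBall (Φ t x) r, t, isCompact_closedBall _ _, hrω, ht.le,
      fun y hy => ⟨t, right_mem_Icc.2 ht.le, hy⟩⟩

lemma IsBallCluster.gathers_of_forall_flow_mem {ω S K A : Set (Euc d)} {T : ℝ}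
    (hS : IsBallCluster ω c r S) (hm : 0 < m) (hv : IsRegularField fun x _ => v x)
    {Φ : ℝ → Euc d → Euc d} (hΦ : IsFlow (fun x _ => v x) Φ) (hT : 0 ≤ T) (hK : IsClosed K)
    (hKS : K ⊆ S) (hit : ∀ x ∈ A, ∃ t ∈ Icc 0 T, Φ t x ∈ K) :
    Gathers v (thickening m (closure S)) (T + 1) A (Metric.ball c r) :=
  ((_root_.gathers_of_forall_flow_mem hm hv hΦ hT hK hS.isOpen hKS hit).mono
    (thickening_subset_of_subset m (hKS.trans subset_closure))).trans
    (hS.gathers hm hv subset_rfl one_pos)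

theorem exists_forall_exists_isControlledFlow_W1_map_le [Nontrivial (Euc d)] {ω : Set (Euc d)}
    (hωo : IsOpen ω) (hωc : IsConnected ω) (hv : IsRegularField fun x _ => v x)
    (hK₀ : IsCompact (msupport μ₀)) (hK₁ : IsCompact (msupport μ₁)) (h₀ : μ₀ ≪ volume)
    {Φ : ℝ → Euc d → Euc d} (hΦ : IsFlow (fun x _ => v x) Φ)
    (hgeo₀ : ∀ x ∈ msupport μ₀, ∃ t, 0 < t ∧ Φ t x ∈ ω)
    (hgeo₁ : ∀ x ∈ msupport μ₁, ∃ t, 0 < t ∧ Φ (-t) x ∈ ω) :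
    ∃ T, 0 < T ∧ ∃ Z ⊆ ω, ∀ ε, 0 < ε →
      ∃ F, IsControlledFlow v Z T F ∧ W1 (μ₀.map F) μ₁ ≤ ENNReal.ofReal ε := by
  obtain ⟨L₀, T₀, hL₀, hL₀ω, hT₀, hit₀⟩ := hΦ.exists_isCompact_forall_mem hv hωo hK₀ hgeo₀
  obtain ⟨L₁, T₁, hL₁, hL₁ω, hT₁, hit₁⟩ := hΦ.neg.exists_isCompact_forall_mem hv.neg hωo hK₁ hgeo₁
  obtain ⟨c, hc⟩ := hωc.nonempty
  obtain ⟨r, hr, hrω⟩ := nhds_basis_closedBall.mem_iff.1 (hωo.mem_nhds hc)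
  obtain ⟨S, hS, hLS⟩ := IsBallCluster.exists_superset hωo hωc.isPreconnected hr hrω
    (hL₀.union hL₁) (union_subset hL₀ω hL₁ω)
  obtain ⟨hL₀S, hL₁S⟩ := union_subset_iff.1 hLS
  obtain ⟨m, hm, hmω⟩ :=
    hS.isBounded.isCompact_closure.exists_thickening_subset_open hωo (hS.closure_subset hrω)
  refine ⟨T₀ + 1 + 1 + (T₁ + 1), by positivity, _, hmω, fun ε hε => ?_⟩
  exact exists_isControlledFlow_W1_map_le_of_gathers hm hv hS.isBounded.closure hr.le
    (closure_ball c hr.ne' ▸ closure_mono hS.ball_subset) h₀ hK₀.isBounded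
    (measure_compl_msupport μ₀) hK₁.isBounded (measure_compl_msupport μ₁)
    (hS.gathers_of_forall_flow_mem hm hv hΦ hT₀ hL₀.isClosed hL₀S hit₀)
    (hS.gathers_of_forall_flow_mem hm hv.neg hΦ.neg hT₁ hL₁.isClosed hL₁S hit₁) hε

end Steering

lemma W1_eq_zero_of_subsingleton {d : ℕ} [Subsingleton (Euc d)] (μ ν : Measure (Euc d))
    [IsProbabilityMeasure μ] [IsProbabilityMeasure ν] : W1 μ ν = 0 := by
  refine le_zero_iff.1 (iInf_le_of_le (μ.prod ν) (iInf_le_of_le (by simp)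
    (iInf_le_of_le (by simp) ?_)))
  simp [Subsingleton.elim (_ : Euc d) 0]

theorem approx_controllability_lipschitz_general {d : ℕ} {ω : Set (Euc d)} (hωo : IsOpen ω)
    (hωc : IsConnected ω) {v : Euc d → Euc d} (hv : IsRegularField fun x _ => v x)
    (μ₀ μ₁ : Measure (Euc d)) [IsProbabilityMeasure μ₀] [IsProbabilityMeasure μ₁]
    (hK₀ : IsCompact (msupport μ₀)) (hK₁ : IsCompact (msupport μ₁)) (h₀ : μ₀ ≪ volume)
    {Φv : ℝ → Euc d → Euc d} (hΦv : IsFlow (fun x _ => v x) Φv)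
    (hgeo₀ : ∀ x ∈ msupport μ₀, ∃ t, 0 < t ∧ Φv t x ∈ ω)
    (hgeo₁ : ∀ x ∈ msupport μ₁, ∃ t, 0 < t ∧ Φv (-t) x ∈ ω) :
    ∃ T : ℝ, 0 < T ∧ ∀ ε : ℝ, 0 < ε →
      ∃ u : Euc d → ℝ → Euc d,
        IsRegularField (fun x t => ω.indicator (fun y => u y t) x) ∧
        ∀ Φ : ℝ → Euc d → Euc d,
          IsFlow (fun x t => v x + ω.indicator (fun y => u y t) x) Φ →
            W1 (μ₀.map (Φ T)) μ₁ ≤ ENNReal.ofReal ε := by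
  rcases subsingleton_or_nontrivial (Euc d) with hd | hd
  · refine ⟨1, one_pos, fun ε _ => ⟨0, ?_, fun Φ _ => ?_⟩⟩
    · exact ⟨⟨0, by simp⟩, ⟨0, by simp⟩, by simp⟩
    · have := Measure.isProbabilityMeasure_map (μ := μ₀) (f := Φ 1) (by fun_prop)
      rw [W1_eq_zero_of_subsingleton]
      exact zero_le
  obtain ⟨T, hT, Z, hZ, hF⟩ :=
    exists_forall_exists_isControlledFlow_W1_map_le hωo hωc hv hK₀ hK₁ h₀ hΦv hgeo₀ hgeo₁
  refine ⟨T, hT, fun ε hε => ?_⟩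
  obtain ⟨F, hF, hFW⟩ := hF ε hε
  obtain ⟨u, hu, hΦF⟩ := hF.exists_control hv hZ
  exact ⟨u, hu, fun Φ hΦ => hΦF Φ hΦ ▸ hFW⟩

/-- Approximate controllability of the transport equation with a Lipschitz
localized control, under the geometric condition. -/
theorem approx_controllability_lipschitz
    (d : ℕ) (ω : Set (Euc d)) (hω : ω.Nonempty) (hωo : IsOpen ω) (hωc : IsConnected ω)
    (v : Euc d → Euc d) (hvL : ∃ K : ℝ≥0, LipschitzWith K v)
    (hvB : ∃ C : ℝ, ∀ x, ‖v x‖ ≤ C)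
    (μ0 μ1 : Measure (Euc d)) [IsProbabilityMeasure μ0] [IsProbabilityMeasure μ1]
    (h0K : IsCompact (msupport μ0)) (h1K : IsCompact (msupport μ1))
    (h0ac : μ0 ≪ volume) (h1ac : μ1 ≪ volume)
    (Φv : ℝ → Euc d → Euc d) (hΦv : IsFlow (fun x _ => v x) Φv)
    (hgeo0 : ∀ x ∈ msupport μ0, ∃ t : ℝ, 0 < t ∧ Φv t x ∈ ω)
    (hgeo1 : ∀ x ∈ msupport μ1, ∃ t : ℝ, 0 < t ∧ Φv (-t) x ∈ ω) :
    ∃ T : ℝ, 0 < T ∧ ∀ ε : ℝ, 0 < ε →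
      ∃ u : Euc d → ℝ → Euc d,
        IsRegularField (fun x t => ω.indicator (fun y => u y t) x) ∧
        ∀ Φ : ℝ → Euc d → Euc d,
          IsFlow (fun x t => v x + ω.indicator (fun y => u y t) x) Φ →
            W1 (μ0.map (Φ T)) μ1 ≤ ENNReal.ofReal ε :=
  approx_controllability_lipschitz_general hωo hωc
    ⟨hvB.imp fun _ hC x _ => hC x, hvL.imp fun _ hK _ => hK, fun _ => measurable_const⟩
    μ0 μ1 h0K h1K h0ac hΦv hgeo0 hgeo1
end
end

section
/- Let ω ⊂ ℝ^d be a nonempty open connected set and v : ℝ^d → ℝ^d a Lipschitz, uniformly bounded vector field. If two compactly supported probability measures μ⁰, μ¹ on ℝ^d satisfy the geometric condition, then there exist real numbers T₀* > 0, T₁* > 0 and a nonempty open set ω₀ whose closure is compact and contained in ω, such that: (i) for each x⁰ ∈ supp(μ⁰) there exists t⁰ ∈ [0, T₀*] with Φ_{t⁰}^v(x⁰) ∈ ω₀; and (ii) for each x¹ ∈ supp(μ¹) there exists t¹ ∈ [0, T₁*] with Φ_{−t¹}^v(x¹) ∈ ω₀. -/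
/-!
A solution of `y t = x + ∫₀ᵗ v (y s) ds` with `v` Lipschitz satisfies Grönwall's inequality, so each
time-`t` map `Φ t` of the flow is Lipschitz, hence continuous. If `Φ t x ∈ ω`, then `Φ t` maps a
whole neighbourhood of `x` into a fixed compact subset of `ω`. Finitely many such neighbourhoods
cover a compact set of initial points, which bounds the hitting times and leaves a finite union of
compact subsets of `ω`; any open set squeezed between this union and `ω`, with compact closure in
`ω`, is a valid target.

The integral equation does not presuppose that `v ∘ y` is integrable, and the integral is `0` where
it is not. There `y` equals `x`, while on the remaining set of times, which is an interval, `y` is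
continuous. Hence `v ∘ y` is measurable, and Grönwall's inequality bounds it on `[0, t]`, so it is
integrable after all.
-/

open MeasureTheory Set
open scoped ENNReal NNReal

noncomputable section

open scoped Topology

theorem exists_Icc_mem_nhdsWithin {α : Type*} [LinearOrder α] [TopologicalSpace α]
    [OrderClosedTopology α] {A : Set α} {t : α} (ht : t ∈ A) :
    ∃ a ∈ A, ∃ b ∈ A, Icc a b ∈ 𝓝[A] t := by
  have below : ∃ a ∈ A, Ici a ∈ 𝓝[A] t := by
    by_cases hmin : ∃ a ∈ A, a < t
    · obtain ⟨a, ha, hat⟩ := hmin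
      exact ⟨a, ha, mem_nhdsWithin_of_mem_nhds (Ici_mem_nhds hat)⟩
    · push Not at hmin
      exact ⟨t, ht, Filter.mem_of_superset self_mem_nhdsWithin hmin⟩
  have above : ∃ b ∈ A, Iic b ∈ 𝓝[A] t := by
    by_cases hmax : ∃ b ∈ A, t < b
    · obtain ⟨b, hb, htb⟩ := hmax
      exact ⟨b, hb, mem_nhdsWithin_of_mem_nhds (Iic_mem_nhds htb)⟩
    · push Not at hmax
      exact ⟨t, ht, Filter.mem_of_superset self_mem_nhdsWithin hmax⟩
  obtain ⟨a, ha, hat⟩ := below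
  obtain ⟨b, hb, htb⟩ := above
  exact ⟨a, ha, b, hb, Filter.inter_mem hat htb⟩

theorem norm_le_mul_norm_sub_add_of_lipschitzWith {E F : Type*} [SeminormedAddCommGroup E]
    [SeminormedAddCommGroup F] {f : E → F} {K : ℝ≥0} (hf : LipschitzWith K f) (z x : E) :
    ‖f z‖ ≤ K * ‖z - x‖ + ‖f x‖ :=
  calc ‖f z‖ ≤ ‖f z - f x‖ + ‖f x‖ := norm_le_norm_sub_add _ _
    _ ≤ K * ‖z - x‖ + ‖f x‖ := by gcongr; exact hf.norm_sub_le z x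

section IntegralEquation

variable {E : Type*} [NormedAddCommGroup E]

theorem ordConnected_setOf_intervalIntegrable (f : ℝ → E) (μ : Measure ℝ) (a : ℝ) :
    OrdConnected {t | IntervalIntegrable f μ a t} :=
  ordConnected_of_uIcc_subset_left (x := a) fun _ ht _ hs =>
    IntervalIntegrable.mono_set ht (uIcc_subset_uIcc_left hs)

variable [NormedSpace ℝ E]

theorem continuousOn_primitive_setOf_intervalIntegrable (f : ℝ → E) (μ : Measure ℝ)
    [NullSingletonClass μ] (a : ℝ) :
    ContinuousOn (fun t => ∫ s in a..t, f s ∂μ) {t | IntervalIntegrable f μ a t} := by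
  intro t ht
  obtain ⟨b, hb, c, hc, hbc⟩ := exists_Icc_mem_nhdsWithin ht
  have ha : a ∈ {t | IntervalIntegrable f μ a t} := IntervalIntegrable.refl
  have hmin : IntervalIntegrable f μ a (min a b) := min_rec' _ ha hb
  have hmax : IntervalIntegrable f μ a (max a c) := max_rec' _ ha hc
  exact (intervalIntegral.continuousWithinAt_primitive (measure_singleton t)
    (hmin.symm.trans hmax)).mono_of_mem_nhdsWithin hbc

/-- `y` is a trajectory of the vector field `v` starting from `x`, in integral form, for all
positive and negative times. Integrability of `v ∘ y` is not part of the definition: at a time `t`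
for which it fails on the interval between `0` and `t`, the equation reads `y t = x`. -/
def IsIntegralSolution (v : E → E) (x : E) (y : ℝ → E) : Prop :=
  ∀ t, y t = x + ∫ s in (0:ℝ)..t, v (y s)

namespace IsIntegralSolution

variable {v : E → E} {x x' : E} {y y' : ℝ → E} {K : ℝ≥0} {s t : ℝ}

theorem apply_zero (h : IsIntegralSolution v x y) : y 0 = x := by
  rw [h 0, intervalIntegral.integral_same, add_zero]

theorem apply_of_not_intervalIntegrable (h : IsIntegralSolution v x y)
    (ht : ¬ IntervalIntegrable (v ∘ y) volume 0 t) : y t = x := by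
  have hzero : ∫ s in (0:ℝ)..t, v (y s) = 0 := intervalIntegral.integral_undef ht
  rw [h t, hzero, add_zero]

theorem comp_neg (h : IsIntegralSolution v x y) :
    IsIntegralSolution (-v) x (fun t => y (-t)) := by
  intro t
  calc y (-t) = x + ∫ s in (0:ℝ)..-t, v (y s) := h (-t)
    _ = x + -∫ s in -t..-0, v (y s) := by rw [neg_zero, intervalIntegral.integral_symm]
    _ = x + ∫ s in (0:ℝ)..t, -v (y (-s)) := by
      rw [← intervalIntegral.integral_comp_neg, intervalIntegral.integral_neg]

theorem continuousOn_setOf_intervalIntegrable (h : IsIntegralSolution v x y) :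
    ContinuousOn y {t | IntervalIntegrable (v ∘ y) volume 0 t} :=
  (continuousOn_const.add
    (continuousOn_primitive_setOf_intervalIntegrable (v ∘ y) volume 0)).congr fun t _ => h t

theorem continuousOn_Icc (h : IsIntegralSolution v x y)
    (ht : IntervalIntegrable (v ∘ y) volume 0 t) : ContinuousOn y (Icc 0 t) :=
  h.continuousOn_setOf_intervalIntegrable.mono
    ((ordConnected_setOf_intervalIntegrable (v ∘ y) volume 0).out IntervalIntegrable.refl ht)

theorem aestronglyMeasurable_comp (h : IsIntegralSolution v x y) (hv : Continuous v) :
    AEStronglyMeasurable (v ∘ y) volume := by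
  set A := {t | IntervalIntegrable (v ∘ y) volume 0 t}
  have hA : MeasurableSet A :=
    (ordConnected_setOf_intervalIntegrable (v ∘ y) volume 0).measurableSet
  have hcont : ContinuousOn (v ∘ y) A :=
    hv.comp_continuousOn h.continuousOn_setOf_intervalIntegrable
  have hconst : ContinuousOn (v ∘ y) Aᶜ :=
    (continuousOn_const (c := v x)).congr fun t ht =>
      congrArg v (h.apply_of_not_intervalIntegrable ht)
  rw [← Measure.restrict_univ (μ := volume), ← union_compl_self A]
  exact aestronglyMeasurable_union_iff.2
    ⟨hcont.aestronglyMeasurable hA, hconst.aestronglyMeasurable hA.compl⟩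

variable [CompleteSpace E]

theorem hasDerivWithinAt_Ici (h : IsIntegralSolution v x y) (hv : Continuous v)
    (ht : IntervalIntegrable (v ∘ y) volume 0 t) (hs : s ∈ Ico 0 t) :
    HasDerivWithinAt y (v (y s)) (Ici s) s := by
  have hs_int : IntervalIntegrable (v ∘ y) volume 0 s :=
    (ordConnected_setOf_intervalIntegrable (v ∘ y) volume 0).out IntervalIntegrable.refl ht
      (Ico_subset_Icc_self hs)
  have hcont : ContinuousWithinAt (v ∘ y) (Ioi s) s :=
    (hv.comp_continuousOn (h.continuousOn_Icc ht) s
      (Ico_subset_Icc_self hs)).mono_of_mem_nhdsWithin (Icc_mem_nhdsGT_of_mem hs)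
  have hprim : HasDerivWithinAt (fun t => ∫ r in (0:ℝ)..t, (v ∘ y) r) (v (y s)) (Ici s) s :=
    intervalIntegral.integral_hasDerivWithinAt_right hs_int
      (h.aestronglyMeasurable_comp hv).stronglyMeasurableAtFilter hcont
  exact (hprim.const_add x).congr_of_eventuallyEq (.of_forall h) (h s)

theorem norm_sub_le_gronwallBound (h : IsIntegralSolution v x y) (hv : LipschitzWith K v)
    (ht : 0 ≤ t) : ‖y t - x‖ ≤ gronwallBound 0 K ‖v x‖ t := by
  by_cases hint : IntervalIntegrable (v ∘ y) volume 0 t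
  · have hstart : ‖y 0 - x‖ ≤ 0 := by rw [h.apply_zero, sub_self, norm_zero]
    have hgronwall := norm_le_gronwallBound_of_norm_deriv_right_le (f := fun s => y s - x)
      ((h.continuousOn_Icc hint).sub continuousOn_const)
      (fun s hs => (h.hasDerivWithinAt_Ici hv.continuous hint hs).sub_const x)
      hstart (fun s _ => norm_le_mul_norm_sub_add_of_lipschitzWith hv (y s) x) t ⟨ht, le_rfl⟩
    rwa [sub_zero] at hgronwall
  · calc ‖y t - x‖ = 0 := by
          rw [h.apply_of_not_intervalIntegrable hint, sub_self, norm_zero]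
      _ = gronwallBound 0 K ‖v x‖ 0 := (gronwallBound_x0 _ _ _).symm
      _ ≤ gronwallBound 0 K ‖v x‖ t :=
        gronwallBound_mono le_rfl (norm_nonneg _) K.coe_nonneg ht

theorem intervalIntegrable_comp (h : IsIntegralSolution v x y) (hv : LipschitzWith K v)
    (ht : 0 ≤ t) : IntervalIntegrable (v ∘ y) volume 0 t := by
  have hbound : ∀ s ∈ Ioc 0 t, ‖v (y s)‖ ≤ K * gronwallBound 0 K ‖v x‖ t + ‖v x‖ := by
    intro s hs
    calc ‖v (y s)‖ ≤ K * ‖y s - x‖ + ‖v x‖ := norm_le_mul_norm_sub_add_of_lipschitzWith hv _ _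
      _ ≤ K * gronwallBound 0 K ‖v x‖ s + ‖v x‖ := by
        gcongr; exact h.norm_sub_le_gronwallBound hv hs.1.le
      _ ≤ K * gronwallBound 0 K ‖v x‖ t + ‖v x‖ := by
        gcongr; exact gronwallBound_mono le_rfl (norm_nonneg _) K.coe_nonneg hs.2
  rw [intervalIntegrable_iff_integrableOn_Ioc_of_le ht]
  exact Measure.integrableOn_of_bounded measure_Ioc_lt_top.ne
    (h.aestronglyMeasurable_comp hv.continuous)
    (ae_restrict_of_forall_mem measurableSet_Ioc hbound)

theorem dist_le_mul_exp (h : IsIntegralSolution v x y) (h' : IsIntegralSolution v x' y')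
    (hv : LipschitzWith K v) (ht : 0 ≤ t) :
    dist (y t) (y' t) ≤ dist x x' * Real.exp (K * t) := by
  have hint := h.intervalIntegrable_comp hv ht
  have hint' := h'.intervalIntegrable_comp hv ht
  have hgronwall := dist_le_of_trajectories_ODE (v := fun _ => v) (fun _ => hv)
    (h.continuousOn_Icc hint) (fun s => h.hasDerivWithinAt_Ici hv.continuous hint)
    (h'.continuousOn_Icc hint') (fun s => h'.hasDerivWithinAt_Ici hv.continuous hint')
    le_rfl t ⟨ht, le_rfl⟩
  rwa [h.apply_zero, h'.apply_zero, sub_zero] at hgronwall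

theorem continuous_flow_of_nonneg {Φ : ℝ → E → E}
    (hΦ : ∀ x, IsIntegralSolution v x (fun t => Φ t x)) (hv : LipschitzWith K v) (ht : 0 ≤ t) :
    Continuous (Φ t) :=
  (LipschitzWith.of_dist_le_mul (K := ⟨Real.exp (K * t), (Real.exp_pos _).le⟩) fun x x' =>
    ((hΦ x).dist_le_mul_exp (hΦ x') hv ht).trans_eq (mul_comm _ _)).continuous

theorem continuous_flow {Φ : ℝ → E → E}
    (hΦ : ∀ x, IsIntegralSolution v x (fun t => Φ t x)) (hv : LipschitzWith K v) (t : ℝ) :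
    Continuous (Φ t) := by
  rcases le_total 0 t with ht | ht
  · exact continuous_flow_of_nonneg hΦ hv ht
  · have hreversed := continuous_flow_of_nonneg (Φ := fun t => Φ (-t))
      (fun x => (hΦ x).comp_neg) hv.neg (neg_nonneg.2 ht)
    simpa only [neg_neg] using hreversed

end IsIntegralSolution

end IntegralEquation

section HittingTimes

variable {X Y : Type*}

/-- Every point of `S` is carried into `C` by some map `Φ t` with `t ∈ [0, T]`: the geometric
condition for a single set of initial points, with a uniform bound on the hitting time. -/
def HitsWithin (Φ : ℝ → X → Y) (T : ℝ) (S : Set X) (C : Set Y) : Prop :=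
  ∀ x ∈ S, ∃ t ∈ Icc 0 T, Φ t x ∈ C

namespace HitsWithin

variable {Φ : ℝ → X → Y} {T T' : ℝ} {S S' : Set X} {C C' : Set Y}

theorem mono (h : HitsWithin Φ T S C) (hT : T ≤ T') (hS : S' ⊆ S) (hC : C ⊆ C') :
    HitsWithin Φ T' S' C' := by
  intro x hx
  obtain ⟨t, ht, htC⟩ := h x (hS hx)
  exact ⟨t, Icc_subset_Icc_right hT ht, hC htC⟩

theorem union (h : HitsWithin Φ T S C) (h' : HitsWithin Φ T' S' C') :
    HitsWithin Φ (max T T') (S ∪ S') (C ∪ C') := by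
  rintro x (hx | hx)
  · exact h.mono (le_max_left _ _) Subset.rfl subset_union_left x hx
  · exact h'.mono (le_max_right _ _) Subset.rfl subset_union_right x hx

theorem exists_isCompact_subset [TopologicalSpace X] [TopologicalSpace Y] [LocallyCompactSpace Y]
    (hΦ : ∀ t, Continuous (Φ t)) (hS : IsCompact S) {ω : Set Y} (hω : IsOpen ω)
    (hhit : ∀ x ∈ S, ∃ t, 0 < t ∧ Φ t x ∈ ω) :
    ∃ T > 0, ∃ C ⊆ ω, IsCompact C ∧ HitsWithin Φ T S C := by
  refine hS.induction_on (p := fun S => ∃ T > 0, ∃ C ⊆ ω, IsCompact C ∧ HitsWithin Φ T S C)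
    ?empty ?mono ?union ?nhds
  case empty => exact ⟨1, one_pos, ∅, empty_subset ω, isCompact_empty, fun _ => False.elim⟩
  case mono =>
    rintro S S' hSS' ⟨T, hT, C, hCω, hC, hits⟩
    exact ⟨T, hT, C, hCω, hC, hits.mono le_rfl hSS' Subset.rfl⟩
  case union =>
    rintro S S' ⟨T, hT, C, hCω, hC, hits⟩ ⟨T', -, C', hCω', hC', hits'⟩
    exact ⟨max T T', lt_max_of_lt_left hT, C ∪ C', union_subset hCω hCω', hC.union hC',
      hits.union hits'⟩
  case nhds =>
    intro x hx
    obtain ⟨t, ht, hxt⟩ := hhit x hx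
    obtain ⟨C, hC, hxC, hCω⟩ := exists_compact_subset hω hxt
    have hnhds : Φ t ⁻¹' C ∈ 𝓝 x :=
      (hΦ t).continuousAt.preimage_mem_nhds (mem_interior_iff_mem_nhds.1 hxC)
    exact ⟨Φ t ⁻¹' C, mem_nhdsWithin_of_mem_nhds hnhds, t, ht, C, hCω, hC,
      fun z hz => ⟨t, ⟨ht.le, le_rfl⟩, hz⟩⟩

end HitsWithin

end HittingTimes

theorem geometric_condition_uniform_general {E : Type*} [NormedAddCommGroup E] [NormedSpace ℝ E]
    [FiniteDimensional ℝ E] {ω : Set E} (hω : ω.Nonempty) (hωo : IsOpen ω)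
    {v : E → E} {K : ℝ≥0} (hv : LipschitzWith K v) {S₀ S₁ : Set E} (hS₀ : IsCompact S₀)
    (hS₁ : IsCompact S₁) {Φ : ℝ → E → E} (hΦ : ∀ x, IsIntegralSolution v x (fun t => Φ t x))
    (hhit₀ : ∀ x ∈ S₀, ∃ t, 0 < t ∧ Φ t x ∈ ω) (hhit₁ : ∀ x ∈ S₁, ∃ t, 0 < t ∧ Φ (-t) x ∈ ω) :
    ∃ (T₀ T₁ : ℝ) (ω₀ : Set E), 0 < T₀ ∧ 0 < T₁ ∧
      ω₀.Nonempty ∧ IsOpen ω₀ ∧ IsCompact (closure ω₀) ∧ closure ω₀ ⊆ ω ∧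
      HitsWithin Φ T₀ S₀ ω₀ ∧ HitsWithin (fun t => Φ (-t)) T₁ S₁ ω₀ := by
  have hcont : ∀ t, Continuous (Φ t) := IsIntegralSolution.continuous_flow hΦ hv
  obtain ⟨T₀, hT₀, C₀, hC₀ω, hC₀, hits₀⟩ :=
    HitsWithin.exists_isCompact_subset hcont hS₀ hωo hhit₀
  obtain ⟨T₁, hT₁, C₁, hC₁ω, hC₁, hits₁⟩ :=
    HitsWithin.exists_isCompact_subset (fun t => hcont (-t)) hS₁ hωo hhit₁
  obtain ⟨p, hp⟩ := hω
  -- `p` only serves to make the target nonempty when `S₀` and `S₁` are both empty.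
  obtain ⟨ω₀, hω₀o, hsub, hω₀ω, hω₀c⟩ := exists_open_between_and_isCompact_closure
    ((hC₀.union hC₁).insert p) hωo (insert_subset hp (union_subset hC₀ω hC₁ω))
  obtain ⟨hpω₀, hC⟩ := insert_subset_iff.1 hsub
  obtain ⟨hC₀ω₀, hC₁ω₀⟩ := union_subset_iff.1 hC
  exact ⟨T₀, T₁, ω₀, hT₀, hT₁, ⟨p, hpω₀⟩, hω₀o, hω₀c, hω₀ω,
    hits₀.mono le_rfl Subset.rfl hC₀ω₀, hits₁.mono le_rfl Subset.rfl hC₁ω₀⟩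

/-- If the geometric condition holds, then it holds with uniformly bounded times
and with the target set a nonempty open set compactly contained in `ω`. -/
theorem geometric_condition_uniform
    (d : ℕ) (ω : Set (Euc d)) (hω : ω.Nonempty) (hωo : IsOpen ω) (hωc : IsConnected ω)
    (v : Euc d → Euc d) (hvL : ∃ K : ℝ≥0, LipschitzWith K v)
    (hvB : ∃ C : ℝ, ∀ x, ‖v x‖ ≤ C)
    (μ0 μ1 : Measure (Euc d)) [IsProbabilityMeasure μ0] [IsProbabilityMeasure μ1]
    (h0K : IsCompact (msupport μ0)) (h1K : IsCompact (msupport μ1))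
    (Φv : ℝ → Euc d → Euc d) (hΦv : IsFlow (fun x _ => v x) Φv)
    (hgeo0 : ∀ x ∈ msupport μ0, ∃ t : ℝ, 0 < t ∧ Φv t x ∈ ω)
    (hgeo1 : ∀ x ∈ msupport μ1, ∃ t : ℝ, 0 < t ∧ Φv (-t) x ∈ ω) :
    ∃ (T0 T1 : ℝ) (ω0 : Set (Euc d)), 0 < T0 ∧ 0 < T1 ∧
      ω0.Nonempty ∧ IsOpen ω0 ∧ IsCompact (closure ω0) ∧ closure ω0 ⊆ ω ∧
      (∀ x ∈ msupport μ0, ∃ t ∈ Icc (0:ℝ) T0, Φv t x ∈ ω0) ∧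
      (∀ x ∈ msupport μ1, ∃ t ∈ Icc (0:ℝ) T1, Φv (-t) x ∈ ω0) := by
  obtain ⟨K, hK⟩ := hvL
  exact geometric_condition_uniform_general hω hωo hK h0K h1K hΦv hgeo0 hgeo1
end
end
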